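/- arXiv:1010.3010 — 3 statements merged into one kernel-verified Lean document; each statement's English description precedes it below -/
import Mathlib

section
/- Let τ : ℝ → ℝ be a smooth bijection with τ'(t) > 0 for all t, let H : ℝ⁹ → ℝ be smooth, and let ψ : ℝ³ → ℝ be a smooth solution of ζ_t + ψ_x ζ_y − ψ_y ζ_x = H(t, x, y, ζ, ζ_x, ζ_y, ζ_xx, ζ_xy, ζ_yy), where ζ := ψ_xx + ψ_yy. Define ψ̃(s,x,y) := ψ(τ⁻¹(s), x, y)/τ'(τ⁻¹(s)) and H̃(s, x, y, w, w₁, w₂, w₁₁, w₁₂, w₂₂) := τ'(t)^{−2}·[H(t, x, y, τ'(t)w, τ'(t)w₁, τ'(t)w₂, τ'(t)w₁₁, τ'(t)w₁₂, τ'(t)w₂₂) − τ''(t)·w], where t := τ⁻¹(s). Then ψ̃ is a smooth solution of ζ̃_s + ψ̃_x ζ̃_y − ψ̃_y ζ̃_x = H̃(s, x, y, ζ̃, ζ̃_x, ζ̃_y, ζ̃_xx, ζ̃_xy, ζ̃_yy), where ζ̃ := ψ̃_xx + ψ̃_yy. -/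
noncomputable section

abbrev V9 := ℝ × ℝ × ℝ × ℝ × ℝ × ℝ × ℝ × ℝ × ℝ

/-- Partial derivative with respect to t. -/
def dT (f : ℝ × ℝ × ℝ → ℝ) (p : ℝ × ℝ × ℝ) : ℝ := fderiv ℝ f p (1, 0, 0)
/-- Partial derivative with respect to x. -/
def dX (f : ℝ × ℝ × ℝ → ℝ) (p : ℝ × ℝ × ℝ) : ℝ := fderiv ℝ f p (0, 1, 0)
/-- Partial derivative with respect to y. -/
def dY (f : ℝ × ℝ × ℝ → ℝ) (p : ℝ × ℝ × ℝ) : ℝ := fderiv ℝ f p (0, 0, 1)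

/-- The vorticity ζ := ψ_xx + ψ_yy. -/
def vort (ψ : ℝ × ℝ × ℝ → ℝ) : ℝ × ℝ × ℝ → ℝ := fun p => dX (dX ψ) p + dY (dY ψ) p

/-- ψ is a smooth solution of the generalized vorticity equation
ζ_t + ψ_x ζ_y − ψ_y ζ_x = H(t, x, y, ζ, ζ_x, ζ_y, ζ_xx, ζ_xy, ζ_yy). -/
def IsHVortSol (H : V9 → ℝ) (ψ : ℝ × ℝ × ℝ → ℝ) : Prop :=
  ContDiff ℝ (⊤ : ℕ∞) ψ ∧ ∀ p : ℝ × ℝ × ℝ,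
    dT (vort ψ) p + dX ψ p * dY (vort ψ) p - dY ψ p * dX (vort ψ) p
      = H (p.1, p.2.1, p.2.2, vort ψ p, dX (vort ψ) p, dY (vort ψ) p,
           dX (dX (vort ψ)) p, dX (dY (vort ψ)) p, dY (dY (vort ψ)) p)

/-! Write `g = τ⁻¹`, so that `g' = 1 / τ'(g)` and `ψ̃ = g'(s) ψ(g(s), x, y)`. Spatial derivatives
commute with this substitution, so `ζ̃ = g'(s) ζ(g(s), x, y)`. By the product and chain rules
`ζ̃_s = g'² ζ_t + g'' ζ`, and the bracket `{ψ̃, ζ̃} = g'² {ψ, ζ}` carries the same factor `g'²`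
because it is bilinear. The surplus term is `g'' ζ = -(τ'' / τ'²) ζ̃`. -/

open scoped ContDiff

lemma injective_of_deriv_ne_zero {f : ℝ → ℝ} (hf : Continuous f) (hf' : ∀ t, deriv f t ≠ 0) :
    Function.Injective f := by
  refine .of_lt_imp_ne fun a b hab heq ↦ ?_
  obtain ⟨t, -, ht⟩ := exists_deriv_eq_zero hab hf.continuousOn heq
  exact hf' t ht

section InverseFunction

variable {𝕜 : Type*} [RCLike 𝕜]

lemma contDiff_of_inverse {f g : 𝕜 → 𝕜} {n : WithTop ℕ∞} (hf : ContDiff 𝕜 n f) (hn : n ≠ 0)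
    (hf' : ∀ t, deriv f t ≠ 0) (hgf : Function.LeftInverse g f)
    (hfg : Function.RightInverse g f) : ContDiff 𝕜 n g := by
  have hopen : IsOpenMap f := isOpenMap_of_hasStrictDerivAt
    (fun t ↦ hf.contDiffAt.hasStrictDerivAt hn) hf'
  let e : 𝕜 ≃ₜ 𝕜 := Equiv.toHomeomorphOfContinuousOpen ⟨f, g, hgf, hfg⟩ hf.continuous hopen
  exact e.contDiff_symm_deriv hf' (fun t ↦ (hf.differentiable hn t).hasDerivAt) hf

lemma deriv_of_rightInverse {f g : 𝕜 → 𝕜} (hf' : ∀ t, deriv f t ≠ 0) (hg : Continuous g)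
    (hfg : Function.RightInverse g f) : deriv g = fun s ↦ (deriv f (g s))⁻¹ :=
  funext fun s ↦ (HasDerivAt.of_local_left_inverse hg.continuousAt
    (differentiableAt_of_deriv_ne_zero (hf' (g s))).hasDerivAt (hf' (g s))
    (.of_forall hfg)).deriv

lemma deriv_deriv_of_rightInverse {f g : 𝕜 → 𝕜} (hf' : ∀ t, deriv f t ≠ 0)
    (hf'' : Differentiable 𝕜 (deriv f)) (hg : Differentiable 𝕜 g)
    (hfg : Function.RightInverse g f) (s : 𝕜) :
    deriv (deriv g) s = -deriv (deriv f) (g s) / deriv f (g s) ^ 3 := by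
  have hg' := deriv_of_rightInverse hf' hg.continuous hfg
  have hcomp : HasDerivAt (fun s ↦ deriv f (g s)) (deriv (deriv f) (g s) * deriv g s) s :=
    (hf'' (g s)).hasDerivAt.comp s (hg s).hasDerivAt
  rw [hg', (hcomp.fun_inv (hf' (g s))).deriv, hg']
  field_simp [hf' (g s)]

end InverseFunction

lemma contDiff_dX {F : ℝ × ℝ × ℝ → ℝ} {m n : WithTop ℕ∞} (hF : ContDiff ℝ n F)
    (hmn : m + 1 ≤ n) : ContDiff ℝ m (dX F) :=
  (hF.fderiv_right hmn).clm_apply contDiff_const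

lemma contDiff_dY {F : ℝ × ℝ × ℝ → ℝ} {m n : WithTop ℕ∞} (hF : ContDiff ℝ n F)
    (hmn : m + 1 ≤ n) : ContDiff ℝ m (dY F) :=
  (hF.fderiv_right hmn).clm_apply contDiff_const

lemma contDiff_vort {F : ℝ × ℝ × ℝ → ℝ} {m n : WithTop ℕ∞} (hF : ContDiff ℝ n F)
    (hmn : m + 1 + 1 ≤ n) : ContDiff ℝ m (vort F) :=
  (contDiff_dX (contDiff_dX hF hmn) le_rfl).add (contDiff_dY (contDiff_dY hF hmn) le_rfl)

/-- The substitution `F ↦ c(s) F(g(s), ·)` in the time variable, with amplitude `c` and time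
change `g`. The stream function of the theorem is transformed with `g = τ⁻¹` and `c = g'`. -/
def timeRescale {E : Type*} (c g : ℝ → ℝ) (F : ℝ × E → ℝ) (p : ℝ × E) : ℝ :=
  c p.1 * F (g p.1, p.2)

section TimeRescale

variable {c g : ℝ → ℝ}

lemma contDiff_timeRescale {E : Type*} [NormedAddCommGroup E] [NormedSpace ℝ E] {F : ℝ × E → ℝ}
    {n : WithTop ℕ∞} (hc : ContDiff ℝ n c) (hg : ContDiff ℝ n g) (hF : ContDiff ℝ n F) :
    ContDiff ℝ n (timeRescale c g F) :=
  (hc.comp contDiff_fst).mul (hF.comp ((hg.comp contDiff_fst).prodMk contDiff_snd))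

lemma fderiv_timeRescale_apply {E : Type*} [NormedAddCommGroup E] [NormedSpace ℝ E]
    {F : ℝ × E → ℝ} {p : ℝ × E} (hc : DifferentiableAt ℝ c p.1) (hg : DifferentiableAt ℝ g p.1)
    (hF : DifferentiableAt ℝ F (g p.1, p.2)) (v : ℝ × E) :
    fderiv ℝ (timeRescale c g F) p v =
      c p.1 * fderiv ℝ F (g p.1, p.2) (v.1 * deriv g p.1, v.2)
        + deriv c p.1 * v.1 * F (g p.1, p.2) := by
  have hamp : HasFDerivAt (fun q : ℝ × E ↦ c q.1) _ p :=
    hc.hasDerivAt.hasFDerivAt.comp p hasFDerivAt_fst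
  have htime : HasFDerivAt (fun q : ℝ × E ↦ g q.1) _ p :=
    hg.hasDerivAt.hasFDerivAt.comp p hasFDerivAt_fst
  have hsubst : HasFDerivAt (fun q : ℝ × E ↦ F (g q.1, q.2)) _ p :=
    HasFDerivAt.comp p (f := fun q : ℝ × E ↦ (g q.1, q.2)) hF.hasFDerivAt
      (htime.prodMk hasFDerivAt_snd)
  have hprod : HasFDerivAt (timeRescale c g F) _ p := hamp.mul hsubst
  rw [hprod.fderiv]
  simp only [add_apply, smul_apply, ContinuousLinearMap.comp_apply,
    ContinuousLinearMap.prod_apply, ContinuousLinearMap.coe_fst', ContinuousLinearMap.coe_snd',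
    ContinuousLinearMap.toSpanSingleton_apply, smul_eq_mul]
  ring

variable {F : ℝ × ℝ × ℝ → ℝ}

lemma dX_timeRescale (hc : Differentiable ℝ c) (hg : Differentiable ℝ g)
    (hF : Differentiable ℝ F) : dX (timeRescale c g F) = timeRescale c g (dX F) := by
  funext p
  simp [dX, fderiv_timeRescale_apply (hc _) (hg _) (hF _), timeRescale]

lemma dY_timeRescale (hc : Differentiable ℝ c) (hg : Differentiable ℝ g)
    (hF : Differentiable ℝ F) : dY (timeRescale c g F) = timeRescale c g (dY F) := by
  funext p
  simp [dY, fderiv_timeRescale_apply (hc _) (hg _) (hF _), timeRescale]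

lemma dT_timeRescale {p : ℝ × ℝ × ℝ} (hc : DifferentiableAt ℝ c p.1)
    (hg : DifferentiableAt ℝ g p.1) (hF : DifferentiableAt ℝ F (g p.1, p.2)) :
    dT (timeRescale c g F) p =
      c p.1 * deriv g p.1 * dT F (g p.1, p.2) + deriv c p.1 * F (g p.1, p.2) := by
  have hdir : ((deriv g p.1, 0, 0) : ℝ × ℝ × ℝ) = deriv g p.1 • (1, 0, 0) := by simp
  rw [dT, fderiv_timeRescale_apply hc hg hF]
  simp only [one_mul, mul_one]
  rw [hdir, map_smul, smul_eq_mul, dT, mul_assoc]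

lemma vort_timeRescale (hc : Differentiable ℝ c) (hg : Differentiable ℝ g)
    (hF : ContDiff ℝ 2 F) : vort (timeRescale c g F) = timeRescale c g (vort F) := by
  have hX : Differentiable ℝ (dX F) :=
    (contDiff_dX (m := 1) hF one_add_one_eq_two.le).differentiable one_ne_zero
  have hY : Differentiable ℝ (dY F) :=
    (contDiff_dY (m := 1) hF one_add_one_eq_two.le).differentiable one_ne_zero
  have hF₁ : Differentiable ℝ F := hF.differentiable two_ne_zero
  funext p
  rw [vort, dX_timeRescale hc hg hF₁, dY_timeRescale hc hg hF₁, dX_timeRescale hc hg hX,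
    dY_timeRescale hc hg hY]
  exact (mul_add _ _ _).symm

end TimeRescale

/-- The material derivative `F_t + {ψ, F}` of `F` along the flow with stream function `ψ`. -/
def materialDeriv (ψ F : ℝ × ℝ × ℝ → ℝ) (p : ℝ × ℝ × ℝ) : ℝ :=
  dT F p + dX ψ p * dY F p - dY ψ p * dX F p

lemma materialDeriv_timeRescale {g : ℝ → ℝ} {ψ F : ℝ × ℝ × ℝ → ℝ} (hg : Differentiable ℝ g)
    (hg' : Differentiable ℝ (deriv g)) (hψ : Differentiable ℝ ψ) (hF : Differentiable ℝ F)
    (p : ℝ × ℝ × ℝ) :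
    materialDeriv (timeRescale (deriv g) g ψ) (timeRescale (deriv g) g F) p =
      deriv g p.1 ^ 2 * materialDeriv ψ F (g p.1, p.2)
        + deriv (deriv g) p.1 * F (g p.1, p.2) := by
  rw [materialDeriv, dT_timeRescale (hg' _) (hg _) (hF _), dX_timeRescale hg' hg hψ,
    dX_timeRescale hg' hg hF, dY_timeRescale hg' hg hψ, dY_timeRescale hg' hg hF]
  simp only [timeRescale, materialDeriv]
  ring

/-- The right-hand side of the vorticity equation solved by `timeRescale (deriv g) g ψ` when `ψ`
solves the equation with right-hand side `H`. It is written in terms of `g` alone, so that `g` need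
not map onto the whole line. Here `q = (s, x, y, J)`, where `J` collects the vorticity
`q.2.2.2.1` and its spatial derivatives. -/
def timeRescaleRhs (g : ℝ → ℝ) (H : V9 → ℝ) (q : V9) : ℝ :=
  deriv g q.1 ^ 2 * H (g q.1, q.2.1, q.2.2.1, (deriv g q.1)⁻¹ • q.2.2.2)
    + deriv (deriv g) q.1 * ((deriv g q.1)⁻¹ * q.2.2.2.1)

theorem isHVortSol_timeRescale {g : ℝ → ℝ} (hg : ContDiff ℝ ∞ g) (hg' : ∀ s, deriv g s ≠ 0)
    {H : V9 → ℝ} {ψ : ℝ × ℝ × ℝ → ℝ} (h : IsHVortSol H ψ) :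
    IsHVortSol (timeRescaleRhs g H) (timeRescale (deriv g) g ψ) := by
  obtain ⟨hψ, heq⟩ := h
  have hdg : ContDiff ℝ ∞ (deriv g) := (contDiff_infty_iff_deriv.1 hg).2
  refine ⟨contDiff_timeRescale hdg hg hψ, fun p ↦ ?_⟩
  have diff {E : Type} [NormedAddCommGroup E] [NormedSpace ℝ E] {f : E → ℝ}
      (hf : ContDiff ℝ ∞ f) : Differentiable ℝ f := hf.differentiable (by simp)
  have hζ : ContDiff ℝ ∞ (vort ψ) := contDiff_vort hψ le_rfl
  have hζX : ContDiff ℝ ∞ (dX (vort ψ)) := contDiff_dX hζ le_rfl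
  have hζY : ContDiff ℝ ∞ (dY (vort ψ)) := contDiff_dY hζ le_rfl
  rw [vort_timeRescale (diff hdg) (diff hg) (contDiff_infty.1 hψ 2)]
  refine (materialDeriv_timeRescale (diff hg) (diff hdg) (diff hψ) (diff hζ) p).trans ?_
  rw [dX_timeRescale (diff hdg) (diff hg) (diff hζ), dY_timeRescale (diff hdg) (diff hg) (diff hζ),
    dX_timeRescale (diff hdg) (diff hg) (diff hζX), dX_timeRescale (diff hdg) (diff hg) (diff hζY),
    dY_timeRescale (diff hdg) (diff hg) (diff hζY)]
  simp only [timeRescaleRhs, timeRescale, Prod.smul_mk, smul_eq_mul,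
    inv_mul_cancel_left₀ (hg' p.1)]
  rw [← heq (g p.1, p.2), materialDeriv]

theorem time_reparameterization_equivalence_general {τ g : ℝ → ℝ} (hτ : ContDiff ℝ ∞ τ)
    (hτ' : ∀ t, deriv τ t ≠ 0) (hg : Function.RightInverse g τ) {H : V9 → ℝ}
    {ψ : ℝ × ℝ × ℝ → ℝ} (h : IsHVortSol H ψ) :
    IsHVortSol
      (fun q ↦ (deriv τ (g q.1) ^ 2)⁻¹ *
        (H (g q.1, q.2.1, q.2.2.1, deriv τ (g q.1) • q.2.2.2)
          - deriv (deriv τ) (g q.1) * q.2.2.2.1))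
      (fun p ↦ ψ (g p.1, p.2) / deriv τ (g p.1)) := by
  have hτinj : Function.Injective τ := injective_of_deriv_ne_zero hτ.continuous hτ'
  have hgs : ContDiff ℝ ∞ g :=
    contDiff_of_inverse hτ (by simp) hτ' (hg.leftInverse_of_injective hτinj) hg
  have hg' : deriv g = fun s ↦ (deriv τ (g s))⁻¹ := deriv_of_rightInverse hτ' hgs.continuous hg
  have hτ'' : Differentiable ℝ (deriv τ) :=
    (contDiff_infty_iff_deriv.1 hτ).2.differentiable (by simp)
  have hg'' := deriv_deriv_of_rightInverse hτ' hτ'' (hgs.differentiable (by simp)) hg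
  have hg'_ne (s : ℝ) : deriv g s ≠ 0 := by simpa only [hg'] using inv_ne_zero (hτ' (g s))
  convert isHVortSol_timeRescale hgs hg'_ne h using 1
  · funext q
    rw [timeRescaleRhs, hg'', hg', inv_inv]
    field_simp [hτ' (g q.1)]
    exact sub_eq_add_neg _ _
  · funext p
    rw [timeRescale, hg', div_eq_inv_mul]

theorem time_reparameterization_equivalence
    (τ : ℝ → ℝ) (hτ : ContDiff ℝ (⊤ : ℕ∞) τ) (hbij : Function.Bijective τ)
    (hpos : ∀ t : ℝ, 0 < deriv τ t)
    (H : V9 → ℝ) (hH : ContDiff ℝ (⊤ : ℕ∞) H)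
    (ψ : ℝ × ℝ × ℝ → ℝ) (h : IsHVortSol H ψ) :
    IsHVortSol
      (fun q => match q with
        | (s, x, y, w, w1, w2, w11, w12, w22) =>
          (deriv τ (Function.invFun τ s) ^ 2)⁻¹ *
            (H (Function.invFun τ s, x, y,
                deriv τ (Function.invFun τ s) * w,
                deriv τ (Function.invFun τ s) * w1,
                deriv τ (Function.invFun τ s) * w2,
                deriv τ (Function.invFun τ s) * w11,
                deriv τ (Function.invFun τ s) * w12,
                deriv τ (Function.invFun τ s) * w22)
              - deriv (deriv τ) (Function.invFun τ s) * w))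
      (fun p => ψ (Function.invFun τ p.1, p.2.1, p.2.2) / deriv τ (Function.invFun τ p.1)) := by
  exact time_reparameterization_equivalence_general hτ (fun t ↦ (hpos t).ne')
    (Function.rightInverse_invFun hbij.2) h
end
end

section
/- Let β : ℝ → ℝ be smooth, let H : ℝ⁹ → ℝ be smooth, and let ψ : ℝ³ → ℝ be a smooth solution of ζ_t + ψ_x ζ_y − ψ_y ζ_x = H(t, x, y, ζ, ζ_x, ζ_y, ζ_xx, ζ_xy, ζ_yy), where ζ := ψ_xx + ψ_yy. Write c := cos β(t), s := sin β(t), and define ψ̃(t,x,y) := ψ(t, xc + ys, −xs + yc) + (β'(t)/2)(x² + y²) and H̃(t, x, y, w, w₁, w₂, w₁₁, w₁₂, w₂₂) := H(t, xc + ys, −xs + yc, w − 2β'(t), cw₁ + sw₂, −sw₁ + cw₂, c²w₁₁ + 2csw₁₂ + s²w₂₂, −csw₁₁ + (c² − s²)w₁₂ + csw₂₂, s²w₁₁ − 2csw₁₂ + c²w₂₂) + 2β''(t). Then ψ̃ is a smooth solution of ζ̃_t + ψ̃_x ζ̃_y − ψ̃_y ζ̃_x = H̃(t, x, y, ζ̃,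 ζ̃_x, ζ̃_y, ζ̃_xx, ζ̃_xy, ζ̃_yy), where ζ̃ := ψ̃_xx + ψ̃_yy. -/
noncomputable section

/-!
In the frame rotating by the angle `β t`, the Laplacian and the bracket `{ψ, ζ} = ψ_x ζ_y - ψ_y ζ_x`
are unchanged, while `ζ_t` gains the term `-{q, ζ}`, where `q = β' t / 2 * (x ^ 2 + y ^ 2)` is the
stream function of the solid-body rotation with angular velocity `β' t`. Adding `q` to `ψ` cancels
this term; it shifts the vorticity by `2 * β' t`, whose time derivative is the extra term
`2 * β'' t` of the new right-hand side.
-/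

section Partials

theorem fderiv_fderiv_apply_comm {E F : Type*} [NormedAddCommGroup E] [NormedSpace ℝ E]
    [NormedAddCommGroup F] [NormedSpace ℝ F] {f : E → F} {x : E} (hf : ContDiffAt ℝ 2 f x)
    (v w : E) :
    fderiv ℝ (fun y => fderiv ℝ f y v) x w = fderiv ℝ (fun y => fderiv ℝ f y w) x v := by
  have hf' : DifferentiableAt ℝ (fderiv ℝ f) x :=
    (hf.fderiv_right (m := 1) (by norm_num)).differentiableAt one_ne_zero
  have hsymm : IsSymmSndFDerivAt ℝ f x := hf.isSymmSndFDerivAt (by simp)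
  simpa [fderiv_clm_apply hf'] using hsymm.eq w v

theorem fderiv_apply_eq_partials (f : ℝ × ℝ × ℝ → ℝ) (p v : ℝ × ℝ × ℝ) :
    fderiv ℝ f p v = v.1 * dT f p + v.2.1 * dX f p + v.2.2 * dY f p := by
  have hv : v = v.1 • (1, 0, 0) + v.2.1 • (0, 1, 0) + v.2.2 • (0, 0, 1) := by simp
  conv_lhs => rw [hv]
  simp only [map_add, map_smul, smul_eq_mul, dT, dX, dY]

section Product

variable {E : Type*} [NormedAddCommGroup E] [NormedSpace ℝ E] {a : ℝ → ℝ} {f : ℝ × E → ℝ}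
  {p : ℝ × E}

theorem fderiv_fst_mul_apply (ha : DifferentiableAt ℝ a p.1) (hf : DifferentiableAt ℝ f p) (v : E) :
    fderiv ℝ (fun q => a q.1 * f q) p (0, v) = a p.1 * fderiv ℝ f p (0, v) := by
  have ha' := ha.hasDerivAt.comp_hasFDerivAt p (hasFDerivAt_fst (𝕜 := ℝ) (F := E))
  refine (congrArg (· (0, v)) (ha'.mul hf.hasFDerivAt).fderiv).trans ?_
  simp

theorem fderiv_add_fst_apply (ha : DifferentiableAt ℝ a p.1) (hf : DifferentiableAt ℝ f p)
    (v : ℝ × E) :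
    fderiv ℝ (fun q => f q + a q.1) p v = fderiv ℝ f p v + v.1 * deriv a p.1 := by
  have ha' := ha.hasDerivAt.comp_hasFDerivAt p (hasFDerivAt_fst (𝕜 := ℝ) (F := E))
  refine (congrArg (· v) (hf.hasFDerivAt.add ha').fderiv).trans ?_
  simp [mul_comm]

end Product

theorem hasFDerivAt_snd_fst (p : ℝ × ℝ × ℝ) :
    HasFDerivAt (fun q : ℝ × ℝ × ℝ => q.2.1)
      (ContinuousLinearMap.fst ℝ ℝ ℝ ∘L ContinuousLinearMap.snd ℝ ℝ (ℝ × ℝ)) p :=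
  (ContinuousLinearMap.fst ℝ ℝ ℝ ∘L ContinuousLinearMap.snd ℝ ℝ (ℝ × ℝ)).hasFDerivAt

theorem hasFDerivAt_snd_snd (p : ℝ × ℝ × ℝ) :
    HasFDerivAt (fun q : ℝ × ℝ × ℝ => q.2.2)
      (ContinuousLinearMap.snd ℝ ℝ ℝ ∘L ContinuousLinearMap.snd ℝ ℝ (ℝ × ℝ)) p :=
  (ContinuousLinearMap.snd ℝ ℝ ℝ ∘L ContinuousLinearMap.snd ℝ ℝ (ℝ × ℝ)).hasFDerivAt

variable {f g : ℝ × ℝ × ℝ → ℝ} {n : ℕ∞}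

theorem contDiff_dX_s15 (hf : ContDiff ℝ (n + 1) f) : ContDiff ℝ n (dX f) :=
  (hf.fderiv_right le_rfl).clm_apply contDiff_const

theorem contDiff_dY_s15 (hf : ContDiff ℝ (n + 1) f) : ContDiff ℝ n (dY f) :=
  (hf.fderiv_right le_rfl).clm_apply contDiff_const

theorem contDiff_vort_s15 (hf : ContDiff ℝ (n + 2) f) : ContDiff ℝ n (vort f) := by
  have hf' : ContDiff ℝ ((n + 1 : ℕ∞) + 1) f := by
    simpa [add_assoc, one_add_one_eq_two] using hf
  exact (contDiff_dX_s15 (contDiff_dX_s15 hf')).add (contDiff_dY_s15 (contDiff_dY_s15 hf'))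

theorem dY_dX_comm (hf : ContDiff ℝ 2 f) (p : ℝ × ℝ × ℝ) : dY (dX f) p = dX (dY f) p :=
  fderiv_fderiv_apply_comm hf.contDiffAt _ _

theorem differentiable_dX (hf : ContDiff ℝ 2 f) : Differentiable ℝ (dX f) :=
  (contDiff_dX_s15 (n := 1) hf).differentiable one_ne_zero

theorem differentiable_dY (hf : ContDiff ℝ 2 f) : Differentiable ℝ (dY f) :=
  (contDiff_dY_s15 (n := 1) hf).differentiable one_ne_zero

variable {a b : ℝ → ℝ} {p : ℝ × ℝ × ℝ}

theorem dX_add (hf : DifferentiableAt ℝ f p) (hg : DifferentiableAt ℝ g p) :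
    dX (fun q => f q + g q) p = dX f p + dX g p := by
  simp only [dX, fderiv_fun_add hf hg, add_apply]

theorem dY_add (hf : DifferentiableAt ℝ f p) (hg : DifferentiableAt ℝ g p) :
    dY (fun q => f q + g q) p = dY f p + dY g p := by
  simp only [dY, fderiv_fun_add hf hg, add_apply]

theorem vort_add (hf : ContDiff ℝ 2 f) (hg : ContDiff ℝ 2 g) (p : ℝ × ℝ × ℝ) :
    vort (fun q => f q + g q) p = vort f p + vort g p := by
  have hX : dX (fun q => f q + g q) = fun q => dX f q + dX g q := funext fun q =>
    dX_add (hf.differentiable two_ne_zero q) (hg.differentiable two_ne_zero q)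
  have hY : dY (fun q => f q + g q) = fun q => dY f q + dY g q := funext fun q =>
    dY_add (hf.differentiable two_ne_zero q) (hg.differentiable two_ne_zero q)
  rw [vort, vort, vort, hX, hY, dX_add (differentiable_dX hf p) (differentiable_dX hg p),
    dY_add (differentiable_dY hf p) (differentiable_dY hg p)]
  ring

/-- The Jacobian bracket `{f, g} = f_x g_y - f_y g_x`, through which the stream function advects
the vorticity. -/
def bracket (f g : ℝ × ℝ × ℝ → ℝ) (p : ℝ × ℝ × ℝ) : ℝ :=
  dX f p * dY g p - dY f p * dX g p

theorem bracket_add_left {f₁ f₂ : ℝ × ℝ × ℝ → ℝ} (hf₁ : DifferentiableAt ℝ f₁ p)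
    (hf₂ : DifferentiableAt ℝ f₂ p) (g : ℝ × ℝ × ℝ → ℝ) :
    bracket (fun q => f₁ q + f₂ q) g p = bracket f₁ g p + bracket f₂ g p := by
  rw [bracket, bracket, bracket, dX_add hf₁ hf₂, dY_add hf₁ hf₂]
  ring

theorem dX_fst_mul_add_fst_mul (ha : DifferentiableAt ℝ a p.1) (hb : DifferentiableAt ℝ b p.1)
    (hf : DifferentiableAt ℝ f p) (hg : DifferentiableAt ℝ g p) :
    dX (fun q => a q.1 * f q + b q.1 * g q) p = a p.1 * dX f p + b p.1 * dX g p := by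
  rw [dX_add (by fun_prop) (by fun_prop)]
  exact congrArg₂ _ (fderiv_fst_mul_apply ha hf _) (fderiv_fst_mul_apply hb hg _)

theorem dY_fst_mul_add_fst_mul (ha : DifferentiableAt ℝ a p.1) (hb : DifferentiableAt ℝ b p.1)
    (hf : DifferentiableAt ℝ f p) (hg : DifferentiableAt ℝ g p) :
    dY (fun q => a q.1 * f q + b q.1 * g q) p = a p.1 * dY f p + b p.1 * dY g p := by
  rw [dY_add (by fun_prop) (by fun_prop)]
  exact congrArg₂ _ (fderiv_fst_mul_apply ha hf _) (fderiv_fst_mul_apply hb hg _)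

end Partials

section RotatingFrame

/-- The change of variables to the frame rotating by the time-dependent angle `β`; time is kept. -/
def rotFrame (β : ℝ → ℝ) (p : ℝ × ℝ × ℝ) : ℝ × ℝ × ℝ :=
  (p.1, p.2.1 * Real.cos (β p.1) + p.2.2 * Real.sin (β p.1),
    -p.2.1 * Real.sin (β p.1) + p.2.2 * Real.cos (β p.1))

variable {β a b : ℝ → ℝ} {f g : ℝ × ℝ × ℝ → ℝ} {p : ℝ × ℝ × ℝ}

theorem contDiff_rotFrame {n : ℕ∞} (hβ : ContDiff ℝ n β) : ContDiff ℝ n (rotFrame β) := by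
  unfold rotFrame
  fun_prop

theorem differentiableAt_rotFrame (hβ : DifferentiableAt ℝ β p.1) :
    DifferentiableAt ℝ (rotFrame β) p := by
  unfold rotFrame
  fun_prop

theorem fderiv_rotFrame_apply (hβ : DifferentiableAt ℝ β p.1) (v : ℝ × ℝ × ℝ) :
    fderiv ℝ (rotFrame β) p v =
      (v.1,
        v.2.1 * Real.cos (β p.1) + v.2.2 * Real.sin (β p.1)
          + v.1 * (deriv β p.1 * (rotFrame β p).2.2),
        -v.2.1 * Real.sin (β p.1) + v.2.2 * Real.cos (β p.1)
          - v.1 * (deriv β p.1 * (rotFrame β p).2.1)) := by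
  have hβp := hβ.hasDerivAt.comp_hasFDerivAt p (hasFDerivAt_fst (𝕜 := ℝ) (F := ℝ × ℝ))
  have hx := hasFDerivAt_snd_fst p
  have hy := hasFDerivAt_snd_snd p
  have h := hasFDerivAt_fst.prodMk
    (((hx.mul hβp.cos).add (hy.mul hβp.sin)).prodMk ((hx.neg.mul hβp.sin).add (hy.mul hβp.cos)))
  refine (congrArg (· v) h.fderiv).trans ?_
  ext <;> simp only [rotFrame, Function.comp_apply, Pi.neg_apply, ContinuousLinearMap.prod_apply,
    ContinuousLinearMap.comp_apply, ContinuousLinearMap.coe_fst', ContinuousLinearMap.coe_snd',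
    add_apply, smul_apply, neg_apply, smul_eq_mul] <;> ring

theorem fderiv_comp_rotFrame_apply (hβ : DifferentiableAt ℝ β p.1)
    (hf : DifferentiableAt ℝ f (rotFrame β p)) (v : ℝ × ℝ × ℝ) :
    fderiv ℝ (fun q => f (rotFrame β q)) p v =
      v.1 * (dT f (rotFrame β p) + deriv β p.1 *
        ((rotFrame β p).2.2 * dX f (rotFrame β p) - (rotFrame β p).2.1 * dY f (rotFrame β p)))
      + v.2.1 * (Real.cos (β p.1) * dX f (rotFrame β p) - Real.sin (β p.1) * dY f (rotFrame β p))
      + v.2.2 * (Real.sin (β p.1) * dX f (rotFrame β p)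
        + Real.cos (β p.1) * dY f (rotFrame β p)) := by
  rw [fderiv_fun_comp p hf (differentiableAt_rotFrame hβ), ContinuousLinearMap.comp_apply,
    fderiv_rotFrame_apply hβ, fderiv_apply_eq_partials]
  ring

theorem dT_comp_rotFrame (hβ : DifferentiableAt ℝ β p.1)
    (hf : DifferentiableAt ℝ f (rotFrame β p)) :
    dT (fun q => f (rotFrame β q)) p = dT f (rotFrame β p) + deriv β p.1 *
      ((rotFrame β p).2.2 * dX f (rotFrame β p) - (rotFrame β p).2.1 * dY f (rotFrame β p)) :=
  (fderiv_comp_rotFrame_apply hβ hf _).trans (by simp)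

theorem dX_comp_rotFrame (hβ : DifferentiableAt ℝ β p.1)
    (hf : DifferentiableAt ℝ f (rotFrame β p)) :
    dX (fun q => f (rotFrame β q)) p =
      Real.cos (β p.1) * dX f (rotFrame β p) + -Real.sin (β p.1) * dY f (rotFrame β p) :=
  (fderiv_comp_rotFrame_apply hβ hf _).trans (by simp [sub_eq_add_neg])

theorem dY_comp_rotFrame (hβ : DifferentiableAt ℝ β p.1)
    (hf : DifferentiableAt ℝ f (rotFrame β p)) :
    dY (fun q => f (rotFrame β q)) p =
      Real.sin (β p.1) * dX f (rotFrame β p) + Real.cos (β p.1) * dY f (rotFrame β p) :=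
  (fderiv_comp_rotFrame_apply hβ hf _).trans (by simp)

theorem bracket_comp_rotFrame (hβ : DifferentiableAt ℝ β p.1)
    (hf : DifferentiableAt ℝ f (rotFrame β p)) (hg : DifferentiableAt ℝ g (rotFrame β p)) :
    bracket (fun q => f (rotFrame β q)) (fun q => g (rotFrame β q)) p =
      bracket f g (rotFrame β p) := by
  rw [bracket, bracket, dX_comp_rotFrame hβ hf, dY_comp_rotFrame hβ hf, dX_comp_rotFrame hβ hg,
    dY_comp_rotFrame hβ hg]
  linear_combination
    (dX f (rotFrame β p) * dY g (rotFrame β p) - dY f (rotFrame β p) * dX g (rotFrame β p))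
      * Real.sin_sq_add_cos_sq (β p.1)

theorem dX_fst_mul_comp_rotFrame_add (ha : DifferentiableAt ℝ a p.1)
    (hb : DifferentiableAt ℝ b p.1) (hβ : DifferentiableAt ℝ β p.1)
    (hf : DifferentiableAt ℝ f (rotFrame β p)) (hg : DifferentiableAt ℝ g (rotFrame β p)) :
    dX (fun q => a q.1 * f (rotFrame β q) + b q.1 * g (rotFrame β q)) p =
      a p.1 *
          (Real.cos (β p.1) * dX f (rotFrame β p) + -Real.sin (β p.1) * dY f (rotFrame β p))
        + b p.1 *
          (Real.cos (β p.1) * dX g (rotFrame β p) + -Real.sin (β p.1) * dY g (rotFrame β p)) := by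
  have hR := differentiableAt_rotFrame hβ
  rw [dX_fst_mul_add_fst_mul ha hb (hf.fun_comp' p hR) (hg.fun_comp' p hR),
    dX_comp_rotFrame hβ hf, dX_comp_rotFrame hβ hg]

theorem dY_fst_mul_comp_rotFrame_add (ha : DifferentiableAt ℝ a p.1)
    (hb : DifferentiableAt ℝ b p.1) (hβ : DifferentiableAt ℝ β p.1)
    (hf : DifferentiableAt ℝ f (rotFrame β p)) (hg : DifferentiableAt ℝ g (rotFrame β p)) :
    dY (fun q => a q.1 * f (rotFrame β q) + b q.1 * g (rotFrame β q)) p =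
      a p.1 *
          (Real.sin (β p.1) * dX f (rotFrame β p) + Real.cos (β p.1) * dY f (rotFrame β p))
        + b p.1 *
          (Real.sin (β p.1) * dX g (rotFrame β p) + Real.cos (β p.1) * dY g (rotFrame β p)) := by
  have hR := differentiableAt_rotFrame hβ
  rw [dY_fst_mul_add_fst_mul ha hb (hf.fun_comp' p hR) (hg.fun_comp' p hR),
    dY_comp_rotFrame hβ hf, dY_comp_rotFrame hβ hg]

theorem dX_dX_comp_rotFrame (hβ : Differentiable ℝ β) (hf : ContDiff ℝ 2 f) (p : ℝ × ℝ × ℝ) :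
    dX (dX fun q => f (rotFrame β q)) p =
      Real.cos (β p.1) ^ 2 * dX (dX f) (rotFrame β p)
        - 2 * Real.cos (β p.1) * Real.sin (β p.1) * dX (dY f) (rotFrame β p)
        + Real.sin (β p.1) ^ 2 * dY (dY f) (rotFrame β p) := by
  have hX : dX (fun q => f (rotFrame β q)) = fun q =>
      Real.cos (β q.1) * dX f (rotFrame β q) + -Real.sin (β q.1) * dY f (rotFrame β q) :=
    funext fun q => dX_comp_rotFrame (hβ q.1) (hf.differentiable two_ne_zero _)
  rw [hX, dX_fst_mul_comp_rotFrame_add (a := fun t => Real.cos (β t))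
    (b := fun t => -Real.sin (β t)) (by fun_prop) (by fun_prop) (hβ _) (differentiable_dX hf _)
    (differentiable_dY hf _), dY_dX_comm hf]
  ring

theorem dX_dY_comp_rotFrame (hβ : Differentiable ℝ β) (hf : ContDiff ℝ 2 f) (p : ℝ × ℝ × ℝ) :
    dX (dY fun q => f (rotFrame β q)) p =
      Real.cos (β p.1) * Real.sin (β p.1) * dX (dX f) (rotFrame β p)
        + (Real.cos (β p.1) ^ 2 - Real.sin (β p.1) ^ 2) * dX (dY f) (rotFrame β p)
        - Real.cos (β p.1) * Real.sin (β p.1) * dY (dY f) (rotFrame β p) := by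
  have hY : dY (fun q => f (rotFrame β q)) = fun q =>
      Real.sin (β q.1) * dX f (rotFrame β q) + Real.cos (β q.1) * dY f (rotFrame β q) :=
    funext fun q => dY_comp_rotFrame (hβ q.1) (hf.differentiable two_ne_zero _)
  rw [hY, dX_fst_mul_comp_rotFrame_add (a := fun t => Real.sin (β t))
    (b := fun t => Real.cos (β t)) (by fun_prop) (by fun_prop) (hβ _) (differentiable_dX hf _)
    (differentiable_dY hf _), dY_dX_comm hf]
  ring

theorem dY_dY_comp_rotFrame (hβ : Differentiable ℝ β) (hf : ContDiff ℝ 2 f) (p : ℝ × ℝ × ℝ) :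
    dY (dY fun q => f (rotFrame β q)) p =
      Real.sin (β p.1) ^ 2 * dX (dX f) (rotFrame β p)
        + 2 * Real.cos (β p.1) * Real.sin (β p.1) * dX (dY f) (rotFrame β p)
        + Real.cos (β p.1) ^ 2 * dY (dY f) (rotFrame β p) := by
  have hY : dY (fun q => f (rotFrame β q)) = fun q =>
      Real.sin (β q.1) * dX f (rotFrame β q) + Real.cos (β q.1) * dY f (rotFrame β q) :=
    funext fun q => dY_comp_rotFrame (hβ q.1) (hf.differentiable two_ne_zero _)
  rw [hY, dY_fst_mul_comp_rotFrame_add (a := fun t => Real.sin (β t))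
    (b := fun t => Real.cos (β t)) (by fun_prop) (by fun_prop) (hβ _) (differentiable_dX hf _)
    (differentiable_dY hf _), dY_dX_comm hf]
  ring

theorem vort_comp_rotFrame (hβ : Differentiable ℝ β) (hf : ContDiff ℝ 2 f) (p : ℝ × ℝ × ℝ) :
    vort (fun q => f (rotFrame β q)) p = vort f (rotFrame β p) := by
  rw [vort, vort, dX_dX_comp_rotFrame hβ hf, dY_dY_comp_rotFrame hβ hf]
  linear_combination (dX (dX f) (rotFrame β p) + dY (dY f) (rotFrame β p))
    * Real.sin_sq_add_cos_sq (β p.1)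

end RotatingFrame

section SolidBody

/-- The stream function of the solid-body rotation with time-dependent angular velocity `ω`. -/
def solidBodyStream (ω : ℝ → ℝ) (p : ℝ × ℝ × ℝ) : ℝ :=
  ω p.1 / 2 * (p.2.1 ^ 2 + p.2.2 ^ 2)

variable {ω : ℝ → ℝ}

theorem contDiff_solidBodyStream {n : ℕ∞} (hω : ContDiff ℝ n ω) :
    ContDiff ℝ n (solidBodyStream ω) := by
  unfold solidBodyStream
  fun_prop

theorem differentiableAt_solidBodyStream {p : ℝ × ℝ × ℝ} (hω : DifferentiableAt ℝ ω p.1) :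
    DifferentiableAt ℝ (solidBodyStream ω) p := by
  unfold solidBodyStream
  fun_prop

theorem fderiv_solidBodyStream_apply {p : ℝ × ℝ × ℝ} (hω : DifferentiableAt ℝ ω p.1)
    (v : ℝ × ℝ) :
    fderiv ℝ (solidBodyStream ω) p (0, v) = ω p.1 * (p.2.1 * v.1 + p.2.2 * v.2) := by
  have hsq := ((hasFDerivAt_snd_fst p).pow 2).add ((hasFDerivAt_snd_snd p).pow 2)
  refine (fderiv_fst_mul_apply (hω.div_const 2) hsq.differentiableAt v).trans ?_
  simp only [hsq.fderiv, Nat.add_one_sub_one, pow_one, nsmul_eq_mul, Nat.cast_ofNat, add_apply,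
    smul_apply, ContinuousLinearMap.comp_apply, ContinuousLinearMap.coe_fst',
    ContinuousLinearMap.coe_snd', smul_eq_mul]
  ring

theorem dX_solidBodyStream {p : ℝ × ℝ × ℝ} (hω : DifferentiableAt ℝ ω p.1) :
    dX (solidBodyStream ω) p = ω p.1 * p.2.1 :=
  (fderiv_solidBodyStream_apply hω _).trans (by simp)

theorem dY_solidBodyStream {p : ℝ × ℝ × ℝ} (hω : DifferentiableAt ℝ ω p.1) :
    dY (solidBodyStream ω) p = ω p.1 * p.2.2 :=
  (fderiv_solidBodyStream_apply hω _).trans (by simp)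

theorem bracket_solidBodyStream_comp_rotFrame {β : ℝ → ℝ} {f : ℝ × ℝ × ℝ → ℝ} {p : ℝ × ℝ × ℝ}
    (hω : DifferentiableAt ℝ ω p.1) (hβ : DifferentiableAt ℝ β p.1)
    (hf : DifferentiableAt ℝ f (rotFrame β p)) :
    bracket (solidBodyStream ω) (fun q => f (rotFrame β q)) p = ω p.1 *
      ((rotFrame β p).2.1 * dY f (rotFrame β p) - (rotFrame β p).2.2 * dX f (rotFrame β p)) := by
  rw [bracket, dX_solidBodyStream hω, dY_solidBodyStream hω, dX_comp_rotFrame hβ hf,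
    dY_comp_rotFrame hβ hf, rotFrame]
  ring

theorem vort_solidBodyStream (hω : Differentiable ℝ ω) (p : ℝ × ℝ × ℝ) :
    vort (solidBodyStream ω) p = 2 * ω p.1 := by
  have hx := hasFDerivAt_snd_fst p
  have hy := hasFDerivAt_snd_snd p
  have hX : dX (solidBodyStream ω) = fun q => ω q.1 * q.2.1 :=
    funext fun q => dX_solidBodyStream (hω q.1)
  have hY : dY (solidBodyStream ω) = fun q => ω q.1 * q.2.2 :=
    funext fun q => dY_solidBodyStream (hω q.1)
  have hXX : dX (fun q => ω q.1 * q.2.1) p = ω p.1 :=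
    (fderiv_fst_mul_apply (hω p.1) hx.differentiableAt _).trans (by simp [hx.fderiv])
  have hYY : dY (fun q => ω q.1 * q.2.2) p = ω p.1 :=
    (fderiv_fst_mul_apply (hω p.1) hy.differentiableAt _).trans (by simp [hy.fderiv])
  rw [vort, hX, hY, hXX, hYY, two_mul]

end SolidBody

section Transformation

/-- The new stream function `ψ̃`: `ψ` in the rotating frame plus the solid-body rotation. -/
def rotStream (β : ℝ → ℝ) (ψ : ℝ × ℝ × ℝ → ℝ) (p : ℝ × ℝ × ℝ) : ℝ :=
  ψ (rotFrame β p) + solidBodyStream (deriv β) p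

/-- The new vorticity `ζ̃` in terms of the old vorticity `ζ`. -/
def rotVort (β : ℝ → ℝ) (ζ : ℝ × ℝ × ℝ → ℝ) (p : ℝ × ℝ × ℝ) : ℝ :=
  ζ (rotFrame β p) + 2 * deriv β p.1

/-- The arguments `(t, x, y, ζ, ζ_x, ζ_y, ζ_xx, ζ_xy, ζ_yy)` of the right-hand side `H`. -/
def spatialJet (ζ : ℝ × ℝ × ℝ → ℝ) (p : ℝ × ℝ × ℝ) : V9 :=
  (p.1, p.2.1, p.2.2, ζ p, dX ζ p, dY ζ p, dX (dX ζ) p, dX (dY ζ) p, dY (dY ζ) p)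

/-- The map of jet space taking the jet of the new vorticity to the jet of the old one; the
components of `q` are `(t, x, y, w, w₁, w₂, w₁₁, w₁₂, w₂₂)`. -/
def rotJet (β : ℝ → ℝ) (q : V9) : V9 :=
  let c := Real.cos (β q.1)
  let s := Real.sin (β q.1)
  let x := q.2.1
  let y := q.2.2.1
  let w := q.2.2.2.1
  let w₁ := q.2.2.2.2.1
  let w₂ := q.2.2.2.2.2.1
  let w₁₁ := q.2.2.2.2.2.2.1
  let w₁₂ := q.2.2.2.2.2.2.2.1
  let w₂₂ := q.2.2.2.2.2.2.2.2
  (q.1, x * c + y * s, -x * s + y * c, w - 2 * deriv β q.1, c * w₁ + s * w₂, -s * w₁ + c * w₂,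
    c ^ 2 * w₁₁ + 2 * c * s * w₁₂ + s ^ 2 * w₂₂,
    -c * s * w₁₁ + (c ^ 2 - s ^ 2) * w₁₂ + c * s * w₂₂,
    s ^ 2 * w₁₁ - 2 * c * s * w₁₂ + c ^ 2 * w₂₂)

/-- The new right-hand side `H̃`. -/
def rotRHS (β : ℝ → ℝ) (H : V9 → ℝ) (q : V9) : ℝ :=
  H (rotJet β q) + 2 * deriv (deriv β) q.1

variable {β : ℝ → ℝ} {ψ ζ : ℝ × ℝ × ℝ → ℝ}

theorem contDiff_rotStream {n : ℕ∞} (hβ : ContDiff ℝ (n + 1) β) (hψ : ContDiff ℝ n ψ) :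
    ContDiff ℝ n (rotStream β ψ) :=
  (hψ.comp (contDiff_rotFrame (hβ.of_le le_self_add))).add
    (contDiff_solidBodyStream (contDiff_succ_iff_deriv.1 hβ).2.2)

theorem vort_rotStream (hβ : ContDiff ℝ 3 β) (hψ : ContDiff ℝ 2 ψ) :
    vort (rotStream β ψ) = rotVort β (vort ψ) := by
  have hβ' : ContDiff ℝ 2 (deriv β) := (contDiff_succ_iff_deriv (n := 2).1 hβ).2.2
  have hβ₂ : ContDiff ℝ 2 β := hβ.of_le (by norm_num)
  funext p
  exact (vort_add (hψ.comp (contDiff_rotFrame (n := 2) hβ₂))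
    (contDiff_solidBodyStream (n := 2) hβ') p).trans <|
    congrArg₂ _ (vort_comp_rotFrame (hβ₂.differentiable two_ne_zero) hψ p)
      (vort_solidBodyStream (hβ'.differentiable two_ne_zero) p)

theorem fderiv_rotVort_apply (hβ : ContDiff ℝ 2 β) (hζ : Differentiable ℝ ζ) (p v : ℝ × ℝ × ℝ) :
    fderiv ℝ (rotVort β ζ) p v =
      fderiv ℝ (fun q => ζ (rotFrame β q)) p v + v.1 * (2 * deriv (deriv β) p.1) := by
  have hβ' : Differentiable ℝ (deriv β) := hβ.differentiable_deriv_two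
  have hR := differentiableAt_rotFrame (hβ.differentiable two_ne_zero p.1)
  refine (fderiv_add_fst_apply (a := fun t => 2 * deriv β t) ((hβ' _).const_mul 2)
    ((hζ _).fun_comp' p hR) v).trans ?_
  rw [deriv_const_mul 2 (hβ' _)]

theorem dX_rotVort (hβ : ContDiff ℝ 2 β) (hζ : Differentiable ℝ ζ) :
    dX (rotVort β ζ) = dX fun q => ζ (rotFrame β q) :=
  funext fun p => (fderiv_rotVort_apply hβ hζ p _).trans (by simp [dX])

theorem dY_rotVort (hβ : ContDiff ℝ 2 β) (hζ : Differentiable ℝ ζ) :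
    dY (rotVort β ζ) = dY fun q => ζ (rotFrame β q) :=
  funext fun p => (fderiv_rotVort_apply hβ hζ p _).trans (by simp [dY])

theorem dT_rotVort (hβ : ContDiff ℝ 2 β) (hζ : Differentiable ℝ ζ) (p : ℝ × ℝ × ℝ) :
    dT (rotVort β ζ) p = dT (fun q => ζ (rotFrame β q)) p + 2 * deriv (deriv β) p.1 :=
  (fderiv_rotVort_apply hβ hζ p _).trans (by simp [dT])

theorem bracket_rotVort_right (hβ : ContDiff ℝ 2 β) (hζ : Differentiable ℝ ζ)
    (f : ℝ × ℝ × ℝ → ℝ) (p : ℝ × ℝ × ℝ) :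
    bracket f (rotVort β ζ) p = bracket f (fun q => ζ (rotFrame β q)) p := by
  rw [bracket, bracket, dX_rotVort hβ hζ, dY_rotVort hβ hζ]

theorem bracket_rotStream_rotVort (hβ : ContDiff ℝ 2 β) (hψ : Differentiable ℝ ψ)
    (hζ : Differentiable ℝ ζ) (p : ℝ × ℝ × ℝ) :
    bracket (rotStream β ψ) (rotVort β ζ) p = bracket ψ ζ (rotFrame β p) + deriv β p.1 *
      ((rotFrame β p).2.1 * dY ζ (rotFrame β p) - (rotFrame β p).2.2 * dX ζ (rotFrame β p)) := by
  have hβp : DifferentiableAt ℝ β p.1 := hβ.differentiable two_ne_zero p.1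
  have hβ'p : DifferentiableAt ℝ (deriv β) p.1 := hβ.differentiable_deriv_two p.1
  have hψR := (hψ _).fun_comp' p (differentiableAt_rotFrame hβp)
  rw [bracket_rotVort_right hβ hζ, ← bracket_comp_rotFrame hβp (hψ _) (hζ _),
    ← bracket_solidBodyStream_comp_rotFrame hβ'p hβp (hζ _)]
  exact bracket_add_left hψR (differentiableAt_solidBodyStream hβ'p) _

theorem dT_rotVort_add_bracket_rotStream (hβ : ContDiff ℝ 2 β) (hψ : Differentiable ℝ ψ)
    (hζ : Differentiable ℝ ζ) (p : ℝ × ℝ × ℝ) :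
    dT (rotVort β ζ) p + bracket (rotStream β ψ) (rotVort β ζ) p =
      dT ζ (rotFrame β p) + bracket ψ ζ (rotFrame β p) + 2 * deriv (deriv β) p.1 := by
  rw [dT_rotVort hβ hζ, dT_comp_rotFrame (hβ.differentiable two_ne_zero _) (hζ _),
    bracket_rotStream_rotVort hβ hψ hζ]
  ring

theorem rotJet_spatialJet_rotVort (hβ : ContDiff ℝ 2 β) (hζ : ContDiff ℝ 2 ζ) (p : ℝ × ℝ × ℝ) :
    rotJet β (spatialJet (rotVort β ζ) p) = spatialJet ζ (rotFrame β p) := by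
  have hβd : Differentiable ℝ β := hβ.differentiable two_ne_zero
  have hζd : Differentiable ℝ ζ := hζ.differentiable two_ne_zero
  have h₁ := Real.sin_sq_add_cos_sq (β p.1)
  have h₂ : (Real.sin (β p.1) ^ 2 + Real.cos (β p.1) ^ 2) ^ 2 = 1 := by rw [h₁, one_pow]
  simp only [spatialJet, dX_rotVort hβ hζd, dY_rotVort hβ hζd, dX_dX_comp_rotFrame hβd hζ,
    dX_dY_comp_rotFrame hβd hζ, dY_dY_comp_rotFrame hβd hζ, dX_comp_rotFrame (hβd _) (hζd _),
    dY_comp_rotFrame (hβd _) (hζd _), rotJet, Prod.mk.injEq]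
  refine ⟨rfl, rfl, rfl, ?ζ, ?ζx, ?ζy, ?ζxx, ?ζxy, ?ζyy⟩
  case ζ => exact add_sub_cancel_right _ _
  case ζx => linear_combination dX ζ (rotFrame β p) * h₁
  case ζy => linear_combination dY ζ (rotFrame β p) * h₁
  case ζxx => linear_combination dX (dX ζ) (rotFrame β p) * h₂
  case ζxy => linear_combination dX (dY ζ) (rotFrame β p) * h₂
  case ζyy => linear_combination dY (dY ζ) (rotFrame β p) * h₂

theorem isHVortSol_iff_bracket {H : V9 → ℝ} :
    IsHVortSol H ψ ↔ ContDiff ℝ (⊤ : ℕ∞) ψ ∧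
      ∀ p, dT (vort ψ) p + bracket ψ (vort ψ) p = H (spatialJet (vort ψ) p) := by
  simp only [IsHVortSol, bracket, spatialJet, add_sub_assoc]

theorem time_dependent_rotation_equivalence_general (hβ : ContDiff ℝ (⊤ : ℕ∞) β) (H : V9 → ℝ)
    (h : IsHVortSol H ψ) : IsHVortSol (rotRHS β H) (rotStream β ψ) := by
  obtain ⟨hψ, hsol⟩ := isHVortSol_iff_bracket.1 h
  have hβ₂ : ContDiff ℝ 2 β := contDiff_infty.1 hβ 2
  have hζ : ContDiff ℝ 2 (vort ψ) := contDiff_vort_s15 (n := 2) (contDiff_infty.1 hψ 4)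
  have hvort : vort (rotStream β ψ) = rotVort β (vort ψ) :=
    vort_rotStream (contDiff_infty.1 hβ 3) (contDiff_infty.1 hψ 2)
  refine isHVortSol_iff_bracket.2 ⟨contDiff_rotStream hβ hψ, fun p => ?_⟩
  rw [hvort]
  calc dT (rotVort β (vort ψ)) p + bracket (rotStream β ψ) (rotVort β (vort ψ)) p
      = dT (vort ψ) (rotFrame β p) + bracket ψ (vort ψ) (rotFrame β p)
          + 2 * deriv (deriv β) p.1 :=
        dT_rotVort_add_bracket_rotStream hβ₂ (hψ.differentiable (by simp))
          (hζ.differentiable two_ne_zero) p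
    _ = H (spatialJet (vort ψ) (rotFrame β p)) + 2 * deriv (deriv β) p.1 := by rw [hsol]
    _ = H (rotJet β (spatialJet (rotVort β (vort ψ)) p)) + 2 * deriv (deriv β) p.1 := by
        rw [rotJet_spatialJet_rotVort hβ₂ hζ]
    _ = rotRHS β H (spatialJet (rotVort β (vort ψ)) p) := rfl

end Transformation

theorem time_dependent_rotation_equivalence
    (β : ℝ → ℝ) (hβ : ContDiff ℝ (⊤ : ℕ∞) β)
    (H : V9 → ℝ) (hH : ContDiff ℝ (⊤ : ℕ∞) H)
    (ψ : ℝ × ℝ × ℝ → ℝ) (h : IsHVortSol H ψ) :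
    IsHVortSol
      (fun q => match q with
        | (t, x, y, w, w1, w2, w11, w12, w22) =>
          H (t, x * Real.cos (β t) + y * Real.sin (β t),
             -x * Real.sin (β t) + y * Real.cos (β t),
             w - 2 * deriv β t,
             Real.cos (β t) * w1 + Real.sin (β t) * w2,
             -Real.sin (β t) * w1 + Real.cos (β t) * w2,
             Real.cos (β t) ^ 2 * w11 + 2 * Real.cos (β t) * Real.sin (β t) * w12
               + Real.sin (β t) ^ 2 * w22,
             -Real.cos (β t) * Real.sin (β t) * w11
               + (Real.cos (β t) ^ 2 - Real.sin (β t) ^ 2) * w12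
               + Real.cos (β t) * Real.sin (β t) * w22,
             Real.sin (β t) ^ 2 * w11 - 2 * Real.cos (β t) * Real.sin (β t) * w12
               + Real.cos (β t) ^ 2 * w22)
          + 2 * deriv (deriv β) t)
      (fun p => ψ (p.1, p.2.1 * Real.cos (β p.1) + p.2.2 * Real.sin (β p.1),
                   -p.2.1 * Real.sin (β p.1) + p.2.2 * Real.cos (β p.1))
        + deriv β p.1 / 2 * (p.2.1 ^ 2 + p.2.2 ^ 2)) :=
  time_dependent_rotation_equivalence_general hβ H h
end
end

section
/- Let I₁, I₂ : ℝ → ℝ be smooth, let Ω ⊆ ℝ³ be open, and let ψ : Ω → ℝ be a smooth function with ζ := ψ_xx + ψ_yy satisfying ζ_x² + ζ_y² ≠ 0 on Ω and solving ζ_t + ψ_x ζ_y − ψ_y ζ_x = ∂_x[(I₁(t)ζ_x − I₂(t)ζ_y)/(ζ_x² + ζ_y²)] + ∂_y[(I₁(t)ζ_y + I₂(t)ζ_x)/(ζ_x² + ζ_y²)], where ∂_x, ∂_y differentiate the full compositions. Then for every ε ∈ ℝ the following are also smooth solutions of the same equation (on the correspondingly transformed domains): (a) ψ̃(t,x,y)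 := e^{2ε} ψ(t, e^{−ε}x, e^{−ε}y); (b) ψ̃(t,x,y) := ψ(t, x cos(εt) + y sin(εt), −x sin(εt) + y cos(εt)) + (ε/2)(x² + y²); (c) ψ̃(t,x,y) := ψ(t, x cos ε + y sin ε, −x sin ε + y cos ε). -/
/-!
Statement 16: symmetries of the parameterization with
f¹ = P₁ = (I₁(t)ζ_x − I₂(t)ζ_y)/(ζ_x² + ζ_y²), f² = P₂ = (I₁(t)ζ_y + I₂(t)ζ_x)/(ζ_x² + ζ_y²):
scalings, time-dependent rotations and rotations map solutions to solutions.
-/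

noncomputable section

/-- The composition (t,x,y) ↦ (I₁(t)ζ_x − I₂(t)ζ_y)/(ζ_x² + ζ_y²). -/
def P1 (I1 I2 : ℝ → ℝ) (ψ : ℝ × ℝ × ℝ → ℝ) : ℝ × ℝ × ℝ → ℝ := fun p =>
  (I1 p.1 * dX (vort ψ) p - I2 p.1 * dY (vort ψ) p)
    / ((dX (vort ψ) p) ^ 2 + (dY (vort ψ) p) ^ 2)

/-- The composition (t,x,y) ↦ (I₁(t)ζ_y + I₂(t)ζ_x)/(ζ_x² + ζ_y²). -/
def P2 (I1 I2 : ℝ → ℝ) (ψ : ℝ × ℝ × ℝ → ℝ) : ℝ × ℝ × ℝ → ℝ := fun p =>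
  (I1 p.1 * dY (vort ψ) p + I2 p.1 * dX (vort ψ) p)
    / ((dX (vort ψ) p) ^ 2 + (dY (vort ψ) p) ^ 2)

/-- ψ is a smooth solution on Ω, with nonvanishing vorticity gradient, of
ζ_t + ψ_x ζ_y − ψ_y ζ_x = ∂_x P₁ + ∂_y P₂. -/
def IsPSolOn (I1 I2 : ℝ → ℝ) (ψ : ℝ × ℝ × ℝ → ℝ) (Ω : Set (ℝ × ℝ × ℝ)) : Prop :=
  ContDiffOn ℝ (⊤ : ℕ∞) ψ Ω ∧
  (∀ p ∈ Ω, (dX (vort ψ) p) ^ 2 + (dY (vort ψ) p) ^ 2 ≠ 0) ∧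
  ∀ p ∈ Ω, dT (vort ψ) p + dX ψ p * dY (vort ψ) p - dY ψ p * dX (vort ψ) p
    = dX (P1 I1 I2 ψ) p + dY (P2 I1 I2 ψ) p

/-!
Write `φ (t, x, y) = (t, a x + b y, -b x + a y)` and identify planar vectors with complex numbers.
On each time slice `φ` is linear and conformal, so `∇(f ∘ φ) = (a + i b) (∇f) ∘ φ`, and the field
`(a + i b) F ∘ φ` has divergence `(a² + b²) (div F) ∘ φ`. Hence, if `k (a² + b²) = 1`, the stream
function `k ψ ∘ φ` has vorticity `ζ ∘ φ`, and since `P₁ + i P₂ = (I₁ + i I₂) ∇ζ / |∇ζ|²` its flux is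
`k (a + i b) (P₁ + i P₂) ∘ φ`, with divergence `(div P) ∘ φ`.

If `φ` also spins with angular velocity `ω`, then `∂_t (ζ ∘ φ)` acquires the term
`ω (y ∂_x - x ∂_y) (ζ ∘ φ)`. It is cancelled by adding the solid-body stream function
`ω (x² + y²) / 2`, which only shifts the vorticity by a constant.
-/

open Filter Topology

section FDeriv

variable {F : Type*} [NormedAddCommGroup F] [NormedSpace ℝ F]

lemma fderiv_fst_mul_apply_inr {α : ℝ → ℝ} {u : ℝ × F → ℝ} {p : ℝ × F}
    (hα : DifferentiableAt ℝ α p.1) (hu : DifferentiableAt ℝ u p) (w : F) :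
    fderiv ℝ (fun q => α q.1 * u q) p (0, w) = α p.1 * fderiv ℝ u p (0, w) := by
  have hfst : HasFDerivAt Prod.fst (ContinuousLinearMap.fst ℝ ℝ F) p := hasFDerivAt_fst
  have hα' : HasFDerivAt (fun q : ℝ × F => α q.1) _ p :=
    hα.hasDerivAt.comp_hasFDerivAt p hfst
  rw [(hα'.fun_mul hu.hasFDerivAt).fderiv]
  simp

lemma contDiffAt_fderiv_apply {f : F → ℝ} {x : F} {m n : WithTop ℕ∞}
    (hf : ContDiffAt ℝ n f x) (hmn : m + 1 ≤ n) (w : F) :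
    ContDiffAt ℝ m (fun y => fderiv ℝ f y w) x :=
  (hf.fderiv_right hmn).clm_apply contDiffAt_const

end FDeriv

/-- The planar divergence `u_x + v_y` of the vector field `(u, v)`; both the vorticity and the right
hand side of the equation are of this form. -/
def planarDiv (u v : ℝ × ℝ × ℝ → ℝ) (p : ℝ × ℝ × ℝ) : ℝ := dX u p + dY v p

/-- The map acting on the time slice `t` as multiplication of `x + i y` by `a t - i b t`. -/
def planarSimilarity (a b : ℝ → ℝ) (p : ℝ × ℝ × ℝ) : ℝ × ℝ × ℝ :=
  (p.1, a p.1 * p.2.1 + b p.1 * p.2.2, -b p.1 * p.2.1 + a p.1 * p.2.2)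

/-- The `x`-component of the planar vector field `(a + i b) ((u + i v) ∘ φ)`, where `φ` is the
planar similarity with coefficients `a`, `b`; gradients and fluxes both transform in this way. -/
def pullbackX (a b : ℝ → ℝ) (u v : ℝ × ℝ × ℝ → ℝ) (p : ℝ × ℝ × ℝ) : ℝ :=
  a p.1 * u (planarSimilarity a b p) - b p.1 * v (planarSimilarity a b p)

/-- The `y`-component of the vector field whose `x`-component is `pullbackX a b u v`. -/
def pullbackY (a b : ℝ → ℝ) (u v : ℝ × ℝ × ℝ → ℝ) (p : ℝ × ℝ × ℝ) : ℝ :=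
  b p.1 * u (planarSimilarity a b p) + a p.1 * v (planarSimilarity a b p)

/-- The stream function `k ψ ∘ φ + (ω / 2) (x² + y²)`, where `φ` is the planar similarity with
coefficients `a`, `b`: the pullback of `ψ` superposed with a solid-body rotation. -/
def similarityTransform (a b : ℝ → ℝ) (k ω : ℝ) (ψ : ℝ × ℝ × ℝ → ℝ) (p : ℝ × ℝ × ℝ) : ℝ :=
  k * ψ (planarSimilarity a b p) + ω / 2 * (p.2.1 ^ 2 + p.2.2 ^ 2)

variable {a b I1 I2 : ℝ → ℝ} {k ω : ℝ} {f u v U V ψ : ℝ × ℝ × ℝ → ℝ} {p : ℝ × ℝ × ℝ}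
  {n : WithTop ℕ∞}

section Calculus

lemma fderiv_apply_eq_dT_dX_dY (f : ℝ × ℝ × ℝ → ℝ) (p : ℝ × ℝ × ℝ) (t x y : ℝ) :
    fderiv ℝ f p (t, x, y) = t * dT f p + x * dX f p + y * dY f p := by
  have hbasis : (t, x, y) = t • ((1, 0, 0) : ℝ × ℝ × ℝ) + x • (0, 1, 0) + y • (0, 0, 1) := by simp
  simp only [hbasis, map_add, map_smul, smul_eq_mul, dT, dX, dY]

lemma planarDiv_congr (hu : u =ᶠ[𝓝 p] U) (hv : v =ᶠ[𝓝 p] V) :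
    planarDiv u v p = planarDiv U V p := by
  simp only [planarDiv, dX, dY, hu.fderiv_eq, hv.fderiv_eq]

lemma planarDiv_const_mul_add_radial (hu : DifferentiableAt ℝ u p) (hv : DifferentiableAt ℝ v p)
    (k c : ℝ) :
    planarDiv (fun q => k * u q + c * q.2.1) (fun q => k * v q + c * q.2.2) p
      = k * planarDiv u v p + 2 * c := by
  have hsnd : HasFDerivAt Prod.snd (ContinuousLinearMap.snd ℝ ℝ (ℝ × ℝ)) p := hasFDerivAt_snd
  have hU := (hu.hasFDerivAt.const_mul k).fun_add (hsnd.fst.const_mul c)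
  have hV := (hv.hasFDerivAt.const_mul k).fun_add (hsnd.snd.const_mul c)
  simp only [planarDiv, dX, dY]
  rw [hU.fderiv, hV.fderiv]
  simp only [add_apply, smul_apply, smul_eq_mul, ContinuousLinearMap.comp_apply,
    ContinuousLinearMap.coe_snd', ContinuousLinearMap.coe_fst', mul_one]
  ring

lemma contDiffAt_dX {m : WithTop ℕ∞} (hf : ContDiffAt ℝ n f p) (hmn : m + 1 ≤ n) :
    ContDiffAt ℝ m (dX f) p :=
  contDiffAt_fderiv_apply hf hmn _

lemma contDiffAt_dY {m : WithTop ℕ∞} (hf : ContDiffAt ℝ n f p) (hmn : m + 1 ≤ n) :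
    ContDiffAt ℝ m (dY f) p :=
  contDiffAt_fderiv_apply hf hmn _

lemma contDiffAt_vort {m : WithTop ℕ∞} (hf : ContDiffAt ℝ n f p) (hmn : m + 1 + 1 ≤ n) :
    ContDiffAt ℝ m (vort f) p :=
  (contDiffAt_dX (contDiffAt_dX hf hmn) le_rfl).add (contDiffAt_dY (contDiffAt_dY hf hmn) le_rfl)

end Calculus

section Similarity

lemma contDiff_planarSimilarity (ha : ContDiff ℝ n a) (hb : ContDiff ℝ n b) :
    ContDiff ℝ n (planarSimilarity a b) := by
  unfold planarSimilarity
  fun_prop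

lemma contDiffOn_similarityTransform {Ω : Set (ℝ × ℝ × ℝ)} (ha : ContDiff ℝ n a)
    (hb : ContDiff ℝ n b) (hψ : ContDiffOn ℝ n ψ Ω) (k ω : ℝ) :
    ContDiffOn ℝ n (similarityTransform a b k ω ψ) (planarSimilarity a b ⁻¹' Ω) := by
  have hpull : ContDiffOn ℝ n (fun p => ψ (planarSimilarity a b p)) (planarSimilarity a b ⁻¹' Ω) :=
    hψ.comp (contDiff_planarSimilarity ha hb).contDiffOn fun _ hp => hp
  have hradial : ContDiff ℝ n fun p : ℝ × ℝ × ℝ => ω / 2 * (p.2.1 ^ 2 + p.2.2 ^ 2) := by fun_prop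
  exact (contDiffOn_const.mul hpull).add hradial.contDiffOn

lemma hasFDerivAt_planarSimilarity {a' b' : ℝ} (ha : HasDerivAt a a' p.1)
    (hb : HasDerivAt b b' p.1) :
    ∃ L : ℝ × ℝ × ℝ →L[ℝ] ℝ × ℝ × ℝ, HasFDerivAt (planarSimilarity a b) L p ∧
      ∀ t x y, L (t, x, y) = (t, t * (a' * p.2.1 + b' * p.2.2) + (a p.1 * x + b p.1 * y),
        t * (-b' * p.2.1 + a' * p.2.2) + (-b p.1 * x + a p.1 * y)) := by
  have hfst : HasFDerivAt Prod.fst (ContinuousLinearMap.fst ℝ ℝ (ℝ × ℝ)) p := hasFDerivAt_fst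
  have hsnd : HasFDerivAt Prod.snd (ContinuousLinearMap.snd ℝ ℝ (ℝ × ℝ)) p := hasFDerivAt_snd
  have hA := ha.comp_hasFDerivAt p hfst
  have hB := hb.comp_hasFDerivAt p hfst
  refine ⟨_, hfst.prodMk (((hA.mul hsnd.fst).add (hB.mul hsnd.snd)).prodMk
    ((hB.neg.mul hsnd.fst).add (hA.mul hsnd.snd))), fun t x y => ?_⟩
  ext <;> simp only [Function.comp_apply, Pi.neg_apply, neg_smul, smul_neg, add_apply, smul_apply,
    neg_apply, ContinuousLinearMap.prod_apply, ContinuousLinearMap.comp_apply,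
    ContinuousLinearMap.coe_fst', ContinuousLinearMap.coe_snd', smul_eq_mul] <;> ring

lemma differentiableAt_planarSimilarity (ha : DifferentiableAt ℝ a p.1)
    (hb : DifferentiableAt ℝ b p.1) : DifferentiableAt ℝ (planarSimilarity a b) p := by
  obtain ⟨L, hL, -⟩ := hasFDerivAt_planarSimilarity ha.hasDerivAt hb.hasDerivAt
  exact hL.differentiableAt

lemma fderiv_comp_planarSimilarity {a' b' : ℝ} (ha : HasDerivAt a a' p.1)
    (hb : HasDerivAt b b' p.1) (hf : DifferentiableAt ℝ f (planarSimilarity a b p)) (t x y : ℝ) :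
    fderiv ℝ (fun q => f (planarSimilarity a b q)) p (t, x, y)
      = t * dT f (planarSimilarity a b p)
        + (t * (a' * p.2.1 + b' * p.2.2) + (a p.1 * x + b p.1 * y)) * dX f (planarSimilarity a b p)
        + (t * (-b' * p.2.1 + a' * p.2.2) + (-b p.1 * x + a p.1 * y))
          * dY f (planarSimilarity a b p) := by
  obtain ⟨L, hL, hLapply⟩ := hasFDerivAt_planarSimilarity ha hb
  have hcomp : HasFDerivAt (fun q => f (planarSimilarity a b q)) _ p := hf.hasFDerivAt.comp p hL
  rw [hcomp.fderiv, ContinuousLinearMap.comp_apply, hLapply, fderiv_apply_eq_dT_dX_dY]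

lemma dX_comp_planarSimilarity (ha : DifferentiableAt ℝ a p.1) (hb : DifferentiableAt ℝ b p.1)
    (hf : DifferentiableAt ℝ f (planarSimilarity a b p)) :
    dX (fun q => f (planarSimilarity a b q)) p = pullbackX a b (dX f) (dY f) p := by
  rw [dX, fderiv_comp_planarSimilarity ha.hasDerivAt hb.hasDerivAt hf, pullbackX]
  ring

lemma dY_comp_planarSimilarity (ha : DifferentiableAt ℝ a p.1) (hb : DifferentiableAt ℝ b p.1)
    (hf : DifferentiableAt ℝ f (planarSimilarity a b p)) :
    dY (fun q => f (planarSimilarity a b q)) p = pullbackY a b (dX f) (dY f) p := by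
  rw [dY, fderiv_comp_planarSimilarity ha.hasDerivAt hb.hasDerivAt hf, pullbackY]
  ring

lemma dT_comp_planarSimilarity_of_spin (ha : HasDerivAt a (-(ω * b p.1)) p.1)
    (hb : HasDerivAt b (ω * a p.1) p.1) (hf : DifferentiableAt ℝ f (planarSimilarity a b p)) :
    dT (fun q => f (planarSimilarity a b q)) p = dT f (planarSimilarity a b p)
      + ω * ((planarSimilarity a b p).2.2 * dX f (planarSimilarity a b p)
        - (planarSimilarity a b p).2.1 * dY f (planarSimilarity a b p)) := by
  rw [dT, fderiv_comp_planarSimilarity ha hb hf]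
  simp only [planarSimilarity]
  ring

lemma eventually_contDiffAt_planarSimilarity (ha : DifferentiableAt ℝ a p.1)
    (hb : DifferentiableAt ℝ b p.1) (hf : ContDiffAt ℝ n f (planarSimilarity a b p))
    (hn : n ≠ (⊤ : ℕ∞)) : ∀ᶠ q in 𝓝 p, ContDiffAt ℝ n f (planarSimilarity a b q) :=
  (differentiableAt_planarSimilarity ha hb).continuousAt.eventually (hf.eventually hn)

end Similarity

section Pullback

lemma differentiableAt_pullbackX (ha : DifferentiableAt ℝ a p.1) (hb : DifferentiableAt ℝ b p.1)
    (hu : DifferentiableAt ℝ u (planarSimilarity a b p))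
    (hv : DifferentiableAt ℝ v (planarSimilarity a b p)) :
    DifferentiableAt ℝ (pullbackX a b u v) p := by
  have hφ := differentiableAt_planarSimilarity ha hb
  exact ((ha.comp p differentiableAt_fst).mul (hu.comp p hφ)).sub
    ((hb.comp p differentiableAt_fst).mul (hv.comp p hφ))

lemma differentiableAt_pullbackY (ha : DifferentiableAt ℝ a p.1) (hb : DifferentiableAt ℝ b p.1)
    (hu : DifferentiableAt ℝ u (planarSimilarity a b p))
    (hv : DifferentiableAt ℝ v (planarSimilarity a b p)) :
    DifferentiableAt ℝ (pullbackY a b u v) p := by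
  have hφ := differentiableAt_planarSimilarity ha hb
  exact ((hb.comp p differentiableAt_fst).mul (hu.comp p hφ)).add
    ((ha.comp p differentiableAt_fst).mul (hv.comp p hφ))

lemma planarDiv_pullback (ha : DifferentiableAt ℝ a p.1) (hb : DifferentiableAt ℝ b p.1)
    (hu : DifferentiableAt ℝ u (planarSimilarity a b p))
    (hv : DifferentiableAt ℝ v (planarSimilarity a b p)) :
    planarDiv (pullbackX a b u v) (pullbackY a b u v) p
      = (a p.1 ^ 2 + b p.1 ^ 2) * planarDiv u v (planarSimilarity a b p) := by
  have hφ := differentiableAt_planarSimilarity ha hb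
  have hu' : DifferentiableAt ℝ (fun q => u (planarSimilarity a b q)) p := hu.comp p hφ
  have hv' : DifferentiableAt ℝ (fun q => v (planarSimilarity a b q)) p := hv.comp p hφ
  have ha' : DifferentiableAt ℝ (fun q : ℝ × ℝ × ℝ => a q.1) p := ha.comp p differentiableAt_fst
  have hb' : DifferentiableAt ℝ (fun q : ℝ × ℝ × ℝ => b q.1) p := hb.comp p differentiableAt_fst
  have hdX : dX (pullbackX a b u v) p
      = a p.1 * dX (fun q => u (planarSimilarity a b q)) p
        - b p.1 * dX (fun q => v (planarSimilarity a b q)) p := by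
    simp only [dX, ← fderiv_fst_mul_apply_inr ha hu', ← fderiv_fst_mul_apply_inr hb hv']
    exact congrArg (· (0, 1, 0)) (fderiv_fun_sub (ha'.fun_mul hu') (hb'.fun_mul hv'))
  have hdY : dY (pullbackY a b u v) p
      = b p.1 * dY (fun q => u (planarSimilarity a b q)) p
        + a p.1 * dY (fun q => v (planarSimilarity a b q)) p := by
    simp only [dY, ← fderiv_fst_mul_apply_inr hb hu', ← fderiv_fst_mul_apply_inr ha hv']
    exact congrArg (· (0, 0, 1)) (fderiv_fun_add (hb'.fun_mul hu') (ha'.fun_mul hv'))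
  rw [planarDiv, hdX, hdY, dX_comp_planarSimilarity ha hb hu, dX_comp_planarSimilarity ha hb hv,
    dY_comp_planarSimilarity ha hb hu, dY_comp_planarSimilarity ha hb hv]
  simp only [pullbackX, pullbackY, planarDiv]
  ring

end Pullback

section Vorticity

lemma fderiv_similarityTransform_inr (ha : DifferentiableAt ℝ a p.1)
    (hb : DifferentiableAt ℝ b p.1) (hψ : DifferentiableAt ℝ ψ (planarSimilarity a b p))
    (k ω : ℝ) (w : ℝ × ℝ) :
    fderiv ℝ (similarityTransform a b k ω ψ) p (0, w)
      = k * fderiv ℝ (fun q => ψ (planarSimilarity a b q)) p (0, w)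
        + ω * (p.2.1 * w.1 + p.2.2 * w.2) := by
  have hsnd : HasFDerivAt Prod.snd (ContinuousLinearMap.snd ℝ ℝ (ℝ × ℝ)) p := hasFDerivAt_snd
  have hpull : DifferentiableAt ℝ (fun q => ψ (planarSimilarity a b q)) p :=
    hψ.comp p (differentiableAt_planarSimilarity ha hb)
  have hsum : HasFDerivAt (similarityTransform a b k ω ψ) _ p :=
    (hpull.hasFDerivAt.const_mul k).add
      (((hsnd.fst.pow 2).add (hsnd.snd.pow 2)).const_mul (ω / 2))
  rw [hsum.fderiv]
  simp only [Nat.add_one_sub_one, pow_one, nsmul_eq_mul, Nat.cast_ofNat, smul_add, add_apply,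
    smul_apply, smul_eq_mul, ContinuousLinearMap.comp_apply, ContinuousLinearMap.coe_snd',
    ContinuousLinearMap.coe_fst']
  ring

lemma dX_similarityTransform (ha : DifferentiableAt ℝ a p.1) (hb : DifferentiableAt ℝ b p.1)
    (hψ : DifferentiableAt ℝ ψ (planarSimilarity a b p)) (k ω : ℝ) :
    dX (similarityTransform a b k ω ψ) p = k * pullbackX a b (dX ψ) (dY ψ) p + ω * p.2.1 := by
  rw [← dX_comp_planarSimilarity ha hb hψ, dX, fderiv_similarityTransform_inr ha hb hψ, dX]
  ring

lemma dY_similarityTransform (ha : DifferentiableAt ℝ a p.1) (hb : DifferentiableAt ℝ b p.1)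
    (hψ : DifferentiableAt ℝ ψ (planarSimilarity a b p)) (k ω : ℝ) :
    dY (similarityTransform a b k ω ψ) p = k * pullbackY a b (dX ψ) (dY ψ) p + ω * p.2.2 := by
  rw [← dY_comp_planarSimilarity ha hb hψ, dY, fderiv_similarityTransform_inr ha hb hψ, dY]
  ring

lemma vort_similarityTransform (ha : Differentiable ℝ a) (hb : Differentiable ℝ b)
    (hψ : ContDiffAt ℝ 2 ψ (planarSimilarity a b p)) (k ω : ℝ) :
    vort (similarityTransform a b k ω ψ) p
      = k * (a p.1 ^ 2 + b p.1 ^ 2) * vort ψ (planarSimilarity a b p) + 2 * ω := by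
  have hψ' : ∀ᶠ q in 𝓝 p, DifferentiableAt ℝ ψ (planarSimilarity a b q) :=
    (eventually_contDiffAt_planarSimilarity (ha p.1) (hb p.1) hψ (by simp)).mono
      fun q hq => hq.differentiableAt two_ne_zero
  have hdX : DifferentiableAt ℝ (dX ψ) (planarSimilarity a b p) :=
    (contDiffAt_dX (m := 1) hψ (by norm_num)).differentiableAt one_ne_zero
  have hdY : DifferentiableAt ℝ (dY ψ) (planarSimilarity a b p) :=
    (contDiffAt_dY (m := 1) hψ (by norm_num)).differentiableAt one_ne_zero
  calc
    planarDiv (dX (similarityTransform a b k ω ψ)) (dY (similarityTransform a b k ω ψ)) p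
    _ = planarDiv (fun q => k * pullbackX a b (dX ψ) (dY ψ) q + ω * q.2.1)
          (fun q => k * pullbackY a b (dX ψ) (dY ψ) q + ω * q.2.2) p :=
      planarDiv_congr
        (hψ'.mono fun q hq => dX_similarityTransform (ha q.1) (hb q.1) hq k ω)
        (hψ'.mono fun q hq => dY_similarityTransform (ha q.1) (hb q.1) hq k ω)
    _ = k * planarDiv (pullbackX a b (dX ψ) (dY ψ)) (pullbackY a b (dX ψ) (dY ψ)) p + 2 * ω :=
      planarDiv_const_mul_add_radial
        (differentiableAt_pullbackX (ha p.1) (hb p.1) hdX hdY)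
        (differentiableAt_pullbackY (ha p.1) (hb p.1) hdX hdY) k ω
    _ = k * (a p.1 ^ 2 + b p.1 ^ 2) * planarDiv (dX ψ) (dY ψ) (planarSimilarity a b p) + 2 * ω := by
      rw [planarDiv_pullback (ha p.1) (hb p.1) hdX hdY, mul_assoc]

lemma fderiv_vort_similarityTransform (ha : Differentiable ℝ a) (hb : Differentiable ℝ b)
    (hk : ∀ t, k * (a t ^ 2 + b t ^ 2) = 1) (hψ : ContDiffAt ℝ 2 ψ (planarSimilarity a b p))
    (ω : ℝ) :
    fderiv ℝ (vort (similarityTransform a b k ω ψ)) p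
      = fderiv ℝ (fun q => vort ψ (planarSimilarity a b q)) p := by
  have hvort : vort (similarityTransform a b k ω ψ)
      =ᶠ[𝓝 p] fun q => vort ψ (planarSimilarity a b q) + 2 * ω := by
    filter_upwards [eventually_contDiffAt_planarSimilarity (ha p.1) (hb p.1) hψ (by simp)]
      with q hq
    rw [vort_similarityTransform ha hb hq, hk, one_mul]
  rw [hvort.fderiv_eq, fderiv_add_const]

lemma differentiableAt_vort (hψ : ContDiffAt ℝ 3 ψ p) : DifferentiableAt ℝ (vort ψ) p :=
  (contDiffAt_vort (m := 1) hψ (by norm_num)).differentiableAt one_ne_zero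

lemma dX_vort_similarityTransform (ha : Differentiable ℝ a) (hb : Differentiable ℝ b)
    (hk : ∀ t, k * (a t ^ 2 + b t ^ 2) = 1) (hψ : ContDiffAt ℝ 3 ψ (planarSimilarity a b p))
    (ω : ℝ) :
    dX (vort (similarityTransform a b k ω ψ)) p
      = pullbackX a b (dX (vort ψ)) (dY (vort ψ)) p := by
  rw [← dX_comp_planarSimilarity (ha p.1) (hb p.1) (differentiableAt_vort hψ), dX, dX,
    fderiv_vort_similarityTransform ha hb hk (hψ.of_le (by norm_num))]

lemma dY_vort_similarityTransform (ha : Differentiable ℝ a) (hb : Differentiable ℝ b)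
    (hk : ∀ t, k * (a t ^ 2 + b t ^ 2) = 1) (hψ : ContDiffAt ℝ 3 ψ (planarSimilarity a b p))
    (ω : ℝ) :
    dY (vort (similarityTransform a b k ω ψ)) p
      = pullbackY a b (dX (vort ψ)) (dY (vort ψ)) p := by
  rw [← dY_comp_planarSimilarity (ha p.1) (hb p.1) (differentiableAt_vort hψ), dY, dY,
    fderiv_vort_similarityTransform ha hb hk (hψ.of_le (by norm_num))]

lemma vorticity_transport_similarityTransform (ha : ∀ t, HasDerivAt a (-(ω * b t)) t)
    (hb : ∀ t, HasDerivAt b (ω * a t) t) (hk : ∀ t, k * (a t ^ 2 + b t ^ 2) = 1)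
    (hψ : ContDiffAt ℝ 3 ψ (planarSimilarity a b p)) :
    dT (vort (similarityTransform a b k ω ψ)) p
        + dX (similarityTransform a b k ω ψ) p * dY (vort (similarityTransform a b k ω ψ)) p
        - dY (similarityTransform a b k ω ψ) p * dX (vort (similarityTransform a b k ω ψ)) p
      = dT (vort ψ) (planarSimilarity a b p)
        + dX ψ (planarSimilarity a b p) * dY (vort ψ) (planarSimilarity a b p)
        - dY ψ (planarSimilarity a b p) * dX (vort ψ) (planarSimilarity a b p) := by
  have ha' : Differentiable ℝ a := fun t => (ha t).differentiableAt
  have hb' : Differentiable ℝ b := fun t => (hb t).differentiableAt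
  have hψ' : DifferentiableAt ℝ ψ (planarSimilarity a b p) := hψ.differentiableAt three_ne_zero
  have hdT : dT (vort (similarityTransform a b k ω ψ)) p
      = dT (fun q => vort ψ (planarSimilarity a b q)) p := by
    rw [dT, dT, fderiv_vort_similarityTransform ha' hb' hk (hψ.of_le (by norm_num))]
  rw [hdT, dT_comp_planarSimilarity_of_spin (ha p.1) (hb p.1) (differentiableAt_vort hψ),
    dX_similarityTransform (ha' p.1) (hb' p.1) hψ',
    dY_similarityTransform (ha' p.1) (hb' p.1) hψ',
    dX_vort_similarityTransform ha' hb' hk hψ, dY_vort_similarityTransform ha' hb' hk hψ]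
  have hx : (planarSimilarity a b p).2.1 = a p.1 * p.2.1 + b p.1 * p.2.2 := rfl
  have hy : (planarSimilarity a b p).2.2 = -b p.1 * p.2.1 + a p.1 * p.2.2 := rfl
  rw [hx, hy]
  simp only [pullbackX, pullbackY]
  linear_combination (dX ψ (planarSimilarity a b p) * dY (vort ψ) (planarSimilarity a b p)
    - dY ψ (planarSimilarity a b p) * dX (vort ψ) (planarSimilarity a b p)) * hk p.1

end Vorticity

section Flux

lemma pullbackX_sq_add_pullbackY_sq (a b : ℝ → ℝ) (u v : ℝ × ℝ × ℝ → ℝ) (p : ℝ × ℝ × ℝ) :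
    pullbackX a b u v p ^ 2 + pullbackY a b u v p ^ 2 = (a p.1 ^ 2 + b p.1 ^ 2)
      * (u (planarSimilarity a b p) ^ 2 + v (planarSimilarity a b p) ^ 2) := by
  simp only [pullbackX, pullbackY]
  ring

lemma P1_similarityTransform (ha : Differentiable ℝ a) (hb : Differentiable ℝ b)
    (hk : ∀ t, k * (a t ^ 2 + b t ^ 2) = 1) (hψ : ContDiffAt ℝ 3 ψ (planarSimilarity a b p))
    (I1 I2 : ℝ → ℝ) (ω : ℝ) :
    P1 I1 I2 (similarityTransform a b k ω ψ) p
      = k * pullbackX a b (P1 I1 I2 ψ) (P2 I1 I2 ψ) p := by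
  rw [P1, dX_vort_similarityTransform ha hb hk hψ, dY_vort_similarityTransform ha hb hk hψ,
    pullbackX_sq_add_pullbackY_sq, eq_inv_of_mul_eq_one_left (hk p.1), div_eq_mul_inv, mul_inv]
  simp only [pullbackX, pullbackY, P1, P2, planarSimilarity]
  ring

lemma P2_similarityTransform (ha : Differentiable ℝ a) (hb : Differentiable ℝ b)
    (hk : ∀ t, k * (a t ^ 2 + b t ^ 2) = 1) (hψ : ContDiffAt ℝ 3 ψ (planarSimilarity a b p))
    (I1 I2 : ℝ → ℝ) (ω : ℝ) :
    P2 I1 I2 (similarityTransform a b k ω ψ) p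
      = k * pullbackY a b (P1 I1 I2 ψ) (P2 I1 I2 ψ) p := by
  rw [P2, dX_vort_similarityTransform ha hb hk hψ, dY_vort_similarityTransform ha hb hk hψ,
    pullbackX_sq_add_pullbackY_sq, eq_inv_of_mul_eq_one_left (hk p.1), div_eq_mul_inv, mul_inv]
  simp only [pullbackX, pullbackY, P1, P2, planarSimilarity]
  ring

lemma differentiableAt_dX_vort (hψ : ContDiffAt ℝ 4 ψ p) : DifferentiableAt ℝ (dX (vort ψ)) p :=
  (contDiffAt_dX (m := 1) (contDiffAt_vort (m := 2) hψ (by norm_num))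
    (by norm_num)).differentiableAt one_ne_zero

lemma differentiableAt_dY_vort (hψ : ContDiffAt ℝ 4 ψ p) : DifferentiableAt ℝ (dY (vort ψ)) p :=
  (contDiffAt_dY (m := 1) (contDiffAt_vort (m := 2) hψ (by norm_num))
    (by norm_num)).differentiableAt one_ne_zero

lemma differentiableAt_P1 (hI1 : DifferentiableAt ℝ I1 p.1) (hI2 : DifferentiableAt ℝ I2 p.1)
    (hψ : ContDiffAt ℝ 4 ψ p) (hne : dX (vort ψ) p ^ 2 + dY (vort ψ) p ^ 2 ≠ 0) :
    DifferentiableAt ℝ (P1 I1 I2 ψ) p := by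
  have hdX := differentiableAt_dX_vort hψ
  have hdY := differentiableAt_dY_vort hψ
  unfold P1
  fun_prop (disch := exact hne)

lemma differentiableAt_P2 (hI1 : DifferentiableAt ℝ I1 p.1) (hI2 : DifferentiableAt ℝ I2 p.1)
    (hψ : ContDiffAt ℝ 4 ψ p) (hne : dX (vort ψ) p ^ 2 + dY (vort ψ) p ^ 2 ≠ 0) :
    DifferentiableAt ℝ (P2 I1 I2 ψ) p := by
  have hdX := differentiableAt_dX_vort hψ
  have hdY := differentiableAt_dY_vort hψ
  unfold P2
  fun_prop (disch := exact hne)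

lemma planarDiv_flux_similarityTransform (hI1 : DifferentiableAt ℝ I1 p.1)
    (hI2 : DifferentiableAt ℝ I2 p.1) (ha : Differentiable ℝ a) (hb : Differentiable ℝ b)
    (hk : ∀ t, k * (a t ^ 2 + b t ^ 2) = 1) (hψ : ContDiffAt ℝ 4 ψ (planarSimilarity a b p))
    (hne : dX (vort ψ) (planarSimilarity a b p) ^ 2
      + dY (vort ψ) (planarSimilarity a b p) ^ 2 ≠ 0) (ω : ℝ) :
    planarDiv (P1 I1 I2 (similarityTransform a b k ω ψ))
        (P2 I1 I2 (similarityTransform a b k ω ψ)) p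
      = planarDiv (P1 I1 I2 ψ) (P2 I1 I2 ψ) (planarSimilarity a b p) := by
  have hψ' : ∀ᶠ q in 𝓝 p, ContDiffAt ℝ 3 ψ (planarSimilarity a b q) :=
    eventually_contDiffAt_planarSimilarity (ha p.1) (hb p.1) (hψ.of_le (by norm_num)) (by simp)
  have hP1 := differentiableAt_P1 (p := planarSimilarity a b p) hI1 hI2 hψ hne
  have hP2 := differentiableAt_P2 (p := planarSimilarity a b p) hI1 hI2 hψ hne
  calc
    planarDiv (P1 I1 I2 (similarityTransform a b k ω ψ))
        (P2 I1 I2 (similarityTransform a b k ω ψ)) p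
    _ = planarDiv (fun q => k * pullbackX a b (P1 I1 I2 ψ) (P2 I1 I2 ψ) q + 0 * q.2.1)
          (fun q => k * pullbackY a b (P1 I1 I2 ψ) (P2 I1 I2 ψ) q + 0 * q.2.2) p := by
      simp only [zero_mul, add_zero]
      exact planarDiv_congr
        (hψ'.mono fun q hq => P1_similarityTransform ha hb hk hq I1 I2 ω)
        (hψ'.mono fun q hq => P2_similarityTransform ha hb hk hq I1 I2 ω)
    _ = k * planarDiv (pullbackX a b (P1 I1 I2 ψ) (P2 I1 I2 ψ))
          (pullbackY a b (P1 I1 I2 ψ) (P2 I1 I2 ψ)) p + 2 * 0 :=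
      planarDiv_const_mul_add_radial
        (differentiableAt_pullbackX (ha p.1) (hb p.1) hP1 hP2)
        (differentiableAt_pullbackY (ha p.1) (hb p.1) hP1 hP2) k 0
    _ = planarDiv (P1 I1 I2 ψ) (P2 I1 I2 ψ) (planarSimilarity a b p) := by
      rw [planarDiv_pullback (ha p.1) (hb p.1) hP1 hP2, ← mul_assoc, hk, one_mul, mul_zero,
        add_zero]

end Flux

theorem IsPSolOn.similarityTransform {Ω : Set (ℝ × ℝ × ℝ)} (h : IsPSolOn I1 I2 ψ Ω)
    (hΩ : IsOpen Ω) (hI1 : Differentiable ℝ I1) (hI2 : Differentiable ℝ I2)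
    (hacont : ContDiff ℝ (⊤ : ℕ∞) a) (hbcont : ContDiff ℝ (⊤ : ℕ∞) b)
    (haspin : ∀ t, HasDerivAt a (-(ω * b t)) t) (hbspin : ∀ t, HasDerivAt b (ω * a t) t)
    (hk : ∀ t, k * (a t ^ 2 + b t ^ 2) = 1) :
    IsPSolOn I1 I2 (similarityTransform a b k ω ψ) (planarSimilarity a b ⁻¹' Ω) := by
  obtain ⟨hsmooth, hne, heq⟩ := h
  have ha : Differentiable ℝ a := fun t => (haspin t).differentiableAt
  have hb : Differentiable ℝ b := fun t => (hbspin t).differentiableAt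
  have hψ {m : ℕ} {q} (hq : q ∈ Ω) : ContDiffAt ℝ m ψ q :=
    (hsmooth.contDiffAt (hΩ.mem_nhds hq)).of_le (mod_cast le_top)
  refine ⟨contDiffOn_similarityTransform hacont hbcont hsmooth k ω, fun p hp => ?_, fun p hp => ?_⟩
  · rw [dX_vort_similarityTransform ha hb hk (hψ hp), dY_vort_similarityTransform ha hb hk (hψ hp),
      pullbackX_sq_add_pullbackY_sq]
    exact mul_ne_zero (right_ne_zero_of_mul_eq_one (hk p.1)) (hne _ hp)
  · rw [vorticity_transport_similarityTransform haspin hbspin hk (hψ hp), heq _ hp]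
    exact (planarDiv_flux_similarityTransform (hI1 p.1) (hI2 p.1) ha hb hk (hψ hp) (hne _ hp)
      ω).symm

theorem symmetries_of_P_parameterization_general {Ω : Set (ℝ × ℝ × ℝ)} (hI1 : Differentiable ℝ I1)
    (hI2 : Differentiable ℝ I2) (hΩ : IsOpen Ω) (h : IsPSolOn I1 I2 ψ Ω) (σ θ ω : ℝ) :
    IsPSolOn I1 I2
      (fun p => Real.exp (2 * σ) * ψ (p.1,
          Real.exp (-σ) * (p.2.1 * Real.cos (ω * p.1 + θ) + p.2.2 * Real.sin (ω * p.1 + θ)),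
          Real.exp (-σ) * (-p.2.1 * Real.sin (ω * p.1 + θ) + p.2.2 * Real.cos (ω * p.1 + θ)))
        + ω / 2 * (p.2.1 ^ 2 + p.2.2 ^ 2))
      {p : ℝ × ℝ × ℝ | (p.1,
        Real.exp (-σ) * (p.2.1 * Real.cos (ω * p.1 + θ) + p.2.2 * Real.sin (ω * p.1 + θ)),
        Real.exp (-σ) * (-p.2.1 * Real.sin (ω * p.1 + θ) + p.2.2 * Real.cos (ω * p.1 + θ)))
          ∈ Ω} := by
  have hangle (t : ℝ) : HasDerivAt (fun t => ω * t + θ) ω t := by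
    simpa using ((hasDerivAt_id t).const_mul ω).add_const θ
  convert h.similarityTransform (a := fun t => Real.exp (-σ) * Real.cos (ω * t + θ))
    (b := fun t => Real.exp (-σ) * Real.sin (ω * t + θ)) (k := Real.exp (2 * σ)) (ω := ω)
    hΩ hI1 hI2 (by fun_prop) (by fun_prop)
    (fun t => ((hangle t).cos.const_mul _).congr_deriv (by ring))
    (fun t => ((hangle t).sin.const_mul _).congr_deriv (by ring)) (fun t => ?_) using 1
  · ext p
    simp only [similarityTransform, planarSimilarity]
    ring_nf
  · ext p
    simp only [planarSimilarity, Set.mem_preimage, Set.mem_ofPred_eq]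
    ring_nf
  · rw [mul_pow, mul_pow, ← mul_add, Real.cos_sq_add_sin_sq, ← Real.exp_nat_mul, mul_one,
      ← Real.exp_add]
    simp

theorem symmetries_of_P_parameterization
    (I1 I2 : ℝ → ℝ) (hI1 : ContDiff ℝ (⊤ : ℕ∞) I1) (hI2 : ContDiff ℝ (⊤ : ℕ∞) I2)
    (Ω : Set (ℝ × ℝ × ℝ)) (hΩ : IsOpen Ω)
    (ψ : ℝ × ℝ × ℝ → ℝ) (h : IsPSolOn I1 I2 ψ Ω) (ε : ℝ) :
    -- (a) scaling
    IsPSolOn I1 I2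
      (fun p => Real.exp (2 * ε) * ψ (p.1, Real.exp (-ε) * p.2.1, Real.exp (-ε) * p.2.2))
      {p : ℝ × ℝ × ℝ | (p.1, Real.exp (-ε) * p.2.1, Real.exp (-ε) * p.2.2) ∈ Ω} ∧
    -- (b) time-dependent rotation
    IsPSolOn I1 I2
      (fun p => ψ (p.1, p.2.1 * Real.cos (ε * p.1) + p.2.2 * Real.sin (ε * p.1),
                   -p.2.1 * Real.sin (ε * p.1) + p.2.2 * Real.cos (ε * p.1))
        + ε / 2 * (p.2.1 ^ 2 + p.2.2 ^ 2))
      {p : ℝ × ℝ × ℝ | (p.1, p.2.1 * Real.cos (ε * p.1) + p.2.2 * Real.sin (ε * p.1),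
                        -p.2.1 * Real.sin (ε * p.1) + p.2.2 * Real.cos (ε * p.1)) ∈ Ω} ∧
    -- (c) rotation
    IsPSolOn I1 I2
      (fun p => ψ (p.1, p.2.1 * Real.cos ε + p.2.2 * Real.sin ε,
                   -p.2.1 * Real.sin ε + p.2.2 * Real.cos ε))
      {p : ℝ × ℝ × ℝ | (p.1, p.2.1 * Real.cos ε + p.2.2 * Real.sin ε,
                        -p.2.1 * Real.sin ε + p.2.2 * Real.cos ε) ∈ Ω} := by
  have hsym := symmetries_of_P_parameterization_general (hI1.differentiable (by simp))
    (hI2.differentiable (by simp)) hΩ h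
  exact ⟨by simpa using hsym ε 0 0, by simpa using hsym 0 0 ε, by simpa using hsym 0 ε 0⟩
end
end
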